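/- arXiv:1601.01205 — 8 statements merged into one kernel-verified Lean document; each statement's English description precedes it below -/
import Mathlib

section
/- Let X be a spectral space and Y a subset of X. Then Y is proconstructible (i.e. closed in X^con) if and only if Y with the subspace topology is a spectral space and the inclusion Y → X is a spectral map. -/
open TopologicalSpace Set

universe u

/-- A topological space is *spectral* if it is quasi-compact, `T0`, has a basis of quasi-compact
open subsets closed under finite intersections, and every nonempty irreducible closed subset
has a (necessarily unique) generic point. -/
structure IsSpectralSpace (X : Type*) [TopologicalSpace X] : Prop where
  compactSpace : CompactSpace X
  t0Space : T0Space X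
  basis : ∃ B : Set (Set X), (∀ U ∈ B, IsOpen U ∧ IsCompact U) ∧
    Set.univ ∈ B ∧ (∀ U ∈ B, ∀ V ∈ B, U ∩ V ∈ B) ∧ TopologicalSpace.IsTopologicalBasis B
  quasiSober : QuasiSober X

/-- The constructible topology: generated by the quasi-compact opens and their complements. -/
def constructibleTop (X : Type*) [TopologicalSpace X] : TopologicalSpace X :=
  TopologicalSpace.generateFrom
    ({U : Set X | IsOpen U ∧ IsCompact U} ∪ {U : Set X | IsOpen Uᶜ ∧ IsCompact Uᶜ})

/-- A subset is Thomason if it is a union of closed subsets with quasi-compact open complement. -/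
def IsThomason {X : Type*} [TopologicalSpace X] (V : Set X) : Prop :=
  ∃ S : Set (Set X), (∀ C ∈ S, IsClosed C ∧ IsOpen Cᶜ ∧ IsCompact Cᶜ) ∧ V = ⋃₀ S

/-- A point is visible if `{x} = V \ (V ∩ W)` for Thomason subsets `V`, `W`. -/
def IsVisiblePoint {X : Type*} [TopologicalSpace X] (x : X) : Prop :=
  ∃ V W : Set X, IsThomason V ∧ IsThomason W ∧ ({x} : Set X) = V \ (V ∩ W)

/-- A dimension function on a topological space. -/
structure IsDimensionFunction {X : Type u} [TopologicalSpace X] (d : X → Ordinal.{u}) : Prop where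
  not_isLimit : ∀ x, ¬ Order.IsSuccLimit (d x)
  le_of_mem_closure : ∀ x y, y ∈ closure ({x} : Set X) → d y ≤ d x
  eq_of_mem_closure : ∀ x y, y ∈ closure ({x} : Set X) → d y = d x → x = y

/-- A spectral dimension function: all sublevel sets are Thomason. -/
def IsSpectralDimensionFunction {X : Type u} [TopologicalSpace X] (d : X → Ordinal.{u}) : Prop :=
  IsDimensionFunction d ∧ ∀ α : Ordinal.{u}, IsThomason {x : X | d x ≤ α}

/-- The Krull filtration `X_{≤α}`. -/
noncomputable def krullSet (X : Type u) [TopologicalSpace X] (α : Ordinal.{u}) : Set X :=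
  Ordinal.limitRecOn α
    {x : X | IsClosed ({x} : Set X)}
    (fun _ S => S ∪ {x : X | x ∈ Sᶜ ∧ IsClosed {y : (Sᶜ : Set X) | (y : X) = x}})
    (fun o _ ih => ⋃ κ : Set.Iio o, ih κ.1 κ.2)

/-- The (transfinite) Krull dimension of a point. -/
noncomputable def kdim (X : Type u) [TopologicalSpace X] (x : X) : Ordinal.{u} :=
  sInf {α : Ordinal.{u} | x ∈ krullSet X α}

/-- The Cantor–Bendixson filtration `X_{≤α}`. -/
noncomputable def cbSet (X : Type u) [TopologicalSpace X] (α : Ordinal.{u}) : Set X :=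
  Ordinal.limitRecOn α
    {x : X | IsOpen ({x} : Set X)}
    (fun _ S => S ∪ {x : X | x ∈ Sᶜ ∧ IsOpen {y : (Sᶜ : Set X) | (y : X) = x}})
    (fun o _ ih => ⋃ κ : Set.Iio o, ih κ.1 κ.2)

/-- `X` has Cantor–Bendixson rank if the filtration exhausts `X`. -/
def HasCantorBendixsonRank (X : Type u) [TopologicalSpace X] : Prop :=
  ∃ β : Ordinal.{u}, cbSet X β = Set.univ

/-- The Cantor–Bendixson rank of a point. -/
noncomputable def cbRank (X : Type u) [TopologicalSpace X] (x : X) : Ordinal.{u} :=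
  sInf {α : Ordinal.{u} | x ∈ cbSet X α}


theorem aux_top_eq (X : Type*) [TopologicalSpace X] :
    constructibleTop X = constructibleTopology X := by
  simp only [constructibleTop, constructibleTopology, constructibleTopologySubbasis,
    isOpen_compl_iff]

theorem aux_spectral {X : Type*} [TopologicalSpace X] (h : IsSpectralSpace X) :
    SpectralSpace X := by
  obtain ⟨B, hB, -, hi, hb⟩ := h.basis
  have h1 := h.compactSpace
  have h2 := h.t0Space
  have h3 := h.quasiSober
  have h4 : PrespectralSpace X := .of_isTopologicalBasis hb fun U hU => (hB U hU).2
  have h5 : QuasiSeparatedSpace X :=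
    QuasiSeparatedSpace.of_isTopologicalBasis (b := fun U : B => (U : Set X))
      (by simpa using hb) fun i j => (hB _ (hi _ i.2 _ j.2)).2
  exact {}

theorem aux_spectral' {X : Type*} [TopologicalSpace X] [SpectralSpace X] :
    IsSpectralSpace X where
  compactSpace := inferInstance
  t0Space := inferInstance
  quasiSober := inferInstance
  basis := ⟨{U | IsOpen U ∧ IsCompact U}, fun _ h => h, ⟨isOpen_univ, isCompact_univ⟩,
    fun _ hU _ hV => ⟨hU.1.inter hV.1, hU.2.inter_of_isOpen hV.2 hU.1 hV.1⟩,
    PrespectralSpace.isTopologicalBasis⟩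

theorem aux_compact (X : Type*) [TopologicalSpace X] [SpectralSpace X] :
    @CompactSpace X (constructibleTop X) := by
  rw [aux_top_eq]
  have hs : Function.Surjective
      (WithTopology.ofTopology : WithConstructibleTopology X → X) := fun x => ⟨.toTopology _ x, rfl⟩
  refine @CompactSpace.mk X (constructibleTopology X) ?_
  rw [← hs.range_eq]
  exact @isCompact_range _ _ _ (constructibleTopology X) _ _
    (WithTopology.continuous_ofTopology _)

theorem aux_open {X : Type*} [TopologicalSpace X] {U : Set X} (h : IsOpen U) (h' : IsCompact U) :
    @IsOpen X (constructibleTop X) U :=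
  isOpen_generateFrom_of_mem (Or.inl ⟨h, h'⟩)

theorem aux_open_compl {X : Type*} [TopologicalSpace X] {U : Set X} (h : IsOpen U)
    (h' : IsCompact U) : @IsOpen X (constructibleTop X) Uᶜ :=
  isOpen_generateFrom_of_mem (Or.inr (by simpa using ⟨h, h'⟩))

theorem aux_closed {X : Type*} [TopologicalSpace X] {U : Set X} (h : IsOpen U)
    (h' : IsCompact U) : @IsClosed X (constructibleTop X) U :=
  (@isOpen_compl_iff _ _ (constructibleTop X)).1 (aux_open_compl h h')

theorem aux_le (X : Type*) [t : TopologicalSpace X] [PrespectralSpace X] :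
    constructibleTop X ≤ t := by
  rw [(PrespectralSpace.isTopologicalBasis (X := X)).eq_generateFrom]
  refine le_generateFrom fun U hU => ?_
  rw [← (PrespectralSpace.isTopologicalBasis (X := X)).eq_generateFrom]
  exact aux_open hU.1 hU.2

theorem aux_t2 (X : Type*) [TopologicalSpace X] [SpectralSpace X] :
    @T2Space X (constructibleTop X) := by
  refine @T2Space.mk X (constructibleTop X) fun x y hxy => ?_
  obtain ⟨U, hU, h⟩ := exists_isOpen_xor_mem hxy
  rcases h with ⟨h1, h2⟩ | ⟨h1, h2⟩
  · obtain ⟨V, hV, hxV, hVU⟩ :=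
      PrespectralSpace.isTopologicalBasis.exists_subset_of_mem_open h1 hU
    exact ⟨V, Vᶜ, aux_open hV.1 hV.2, aux_open_compl hV.1 hV.2, hxV, fun h => h2 (hVU h),
      disjoint_compl_right⟩
  · obtain ⟨V, hV, hxV, hVU⟩ :=
      PrespectralSpace.isTopologicalBasis.exists_subset_of_mem_open h1 hU
    exact ⟨Vᶜ, V, aux_open_compl hV.1 hV.2, aux_open hV.1 hV.2, fun h => h2 (hVU h), hxV,
      disjoint_compl_left⟩

theorem aux_bwd {X : Type*} [TopologicalSpace X] [SpectralSpace X] (Y : Set X)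
    [SpectralSpace Y] (h : IsSpectralMap ((↑) : Y → X)) : @IsClosed X (constructibleTop X) Y := by
  have hc : @Continuous Y X (constructibleTop Y) (constructibleTop X) (↑) := by
    refine continuous_generateFrom_iff.2 ?_
    rintro U (hU | hU)
    · exact aux_open (hU.1.preimage h.continuous) (h.isCompact_preimage_of_isOpen hU.1 hU.2)
    · have := aux_open_compl (hU.1.preimage h.continuous)
        (h.isCompact_preimage_of_isOpen hU.1 hU.2)
      rwa [preimage_compl, compl_compl] at this
  have hr := @isCompact_range Y X (constructibleTop Y) (constructibleTop X) (aux_compact Y) _ hc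
  rw [Subtype.range_coe] at hr
  exact @IsCompact.isClosed X (constructibleTop X) (aux_t2 X) Y hr

theorem aux_compact_of {X : Type*} [TopologicalSpace X] [SpectralSpace X] {S : Set X}
    (h : @IsClosed X (constructibleTop X) S) : IsCompact S := by
  have := @IsClosed.isCompact _ (constructibleTop X) _ (aux_compact X) h
  have := @IsCompact.image X X (constructibleTop X) _ _ _ this
    (continuous_id_iff_le.2 (aux_le X))
  simpa using this

theorem aux_sober {X : Type*} [TopologicalSpace X] [SpectralSpace X] {Y : Set X}
    (h : @IsClosed X (constructibleTop X) Y) : QuasiSober Y where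
  sober {S} hS hS' := by
    have hirr := hS.image ((↑) : Y → X) continuous_subtype_val.continuousOn
    have hx := hirr.isGenericPoint_genericPoint_closure
    generalize hirr.genericPoint = x at hx
    have hcl : ((↑) : Y → X) '' S = Y ∩ closure (((↑) : Y → X) '' S) := by
      conv_lhs => rw [← hS'.closure_eq, Topology.IsInducing.subtypeVal.closure_eq_preimage_closure_image]
      rw [Subtype.image_preimage_coe]
    have hT : @IsClosed X (constructibleTop X) (((↑) : Y → X) '' S) := by
      rw [hcl]
      exact @IsClosed.inter _ _ _ (constructibleTop X) h (isClosed_closure.mono (aux_le X))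
    let ι := {U : Set X // (IsOpen U ∧ IsCompact U) ∧ x ∈ U}
    haveI : Nonempty ι := ⟨⟨univ, ⟨isOpen_univ, isCompact_univ⟩, mem_univ _⟩⟩
    have hclo : ∀ i : ι, @IsClosed X (constructibleTop X) ((((↑) : Y → X) '' S) ∩ i.1) := fun i =>
      @IsClosed.inter _ _ _ (constructibleTop X) hT (aux_closed i.2.1.1 i.2.1.2)
    have hne := @IsCompact.nonempty_iInter_of_directed_nonempty_isCompact_isClosed X
      (constructibleTop X) ι _ (fun i => (((↑) : Y → X) '' S) ∩ i.1)
      (fun U V => ⟨⟨U.1 ∩ V.1, ⟨U.2.1.1.inter V.2.1.1,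
        U.2.1.2.inter_of_isOpen V.2.1.2 U.2.1.1 V.2.1.1⟩, U.2.2, V.2.2⟩,
        inter_subset_inter_right _ inter_subset_left,
        inter_subset_inter_right _ inter_subset_right⟩)
      (fun i => by
        rw [inter_comm]
        exact mem_closure_iff.1 hx.mem i.1 i.2.1.1 i.2.2)
      (fun i => @IsClosed.isCompact _ (constructibleTop X) _ (aux_compact X) (hclo i))
      hclo
    obtain ⟨y, hy⟩ := hne
    rw [mem_iInter] at hy
    obtain ⟨z, hz, rfl⟩ := (hy (Classical.arbitrary ι)).1
    have hzx : (z : X) ⤳ x := by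
      rw [specializes_iff_forall_open]
      intro U hU hxU
      obtain ⟨V, hV, hxV, hVU⟩ :=
        PrespectralSpace.isTopologicalBasis.exists_subset_of_mem_open hxU hU
      exact hVU (hy ⟨V, hV, hxV⟩).2
    refine ⟨z, isGenericPoint_iff_specializes.2 fun s => ⟨fun hs => hs.mem_closed hS' hz,
      fun hs => ?_⟩⟩
    exact Topology.IsInducing.subtypeVal.specializes_iff.1
      (hzx.trans (hx.specializes (subset_closure (mem_image_of_mem _ hs))))

theorem aux_fwd {X : Type*} [TopologicalSpace X] [SpectralSpace X] {Y : Set X}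
    (h : @IsClosed X (constructibleTop X) Y) :
    SpectralSpace Y ∧ IsSpectralMap ((↑) : Y → X) := by
  have hs : IsSpectralMap ((↑) : Y → X) := by
    refine ⟨continuous_subtype_val, fun U hU hU' => ?_⟩
    rw [Subtype.isCompact_iff, Subtype.image_preimage_coe]
    exact aux_compact_of (@IsClosed.inter _ _ _ (constructibleTop X) h (aux_closed hU hU'))
  have h1 : CompactSpace Y := isCompact_iff_compactSpace.1 (aux_compact_of h)
  have h3 := aux_sober h
  have h4 := PrespectralSpace.of_isInducing _ Topology.IsInducing.subtypeVal hs
  have h5 : QuasiSeparatedSpace Y := by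
    refine QuasiSeparatedSpace.of_isTopologicalBasis
      (b := fun U : {U : Set X | IsOpen U ∧ IsCompact U} => ((↑) : Y → X) ⁻¹' U.1) ?_ ?_
    · have := (PrespectralSpace.isTopologicalBasis (X := X)).isInducing
        (Topology.IsInducing.subtypeVal (t := Y))
      rwa [image_eq_range] at this
    · intro U V
      rw [← preimage_inter]
      exact hs.isCompact_preimage_of_isOpen (U.2.1.inter V.2.1)
        (U.2.2.inter_of_isOpen V.2.2 U.2.1 V.2.1)
  exact ⟨{}, hs⟩

theorem statement1 {X : Type u} [TopologicalSpace X] (hX : IsSpectralSpace X) (Y : Set X) :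
    @IsClosed X (constructibleTop X) Y ↔
      IsSpectralSpace Y ∧ IsSpectralMap ((↑) : Y → X) := by
  have := aux_spectral hX
  constructor
  · intro h
    obtain ⟨h1, h2⟩ := aux_fwd h
    exact ⟨aux_spectral', h2⟩
  · rintro ⟨h1, h2⟩
    have := aux_spectral h1
    exact aux_bwd Y h2
end

section
/- Let X be a spectral space, Y a proconstructible subset of X with the subspace topology, and V a nonempty irreducible closed subset of Y. Let W be the closure of V in X. Then W is irreducible in X, its unique generic point x lies in V, and V is the closure of {x} in Y; in particular every nonempty irreducible closed subset of Y has a generic point. -/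
open TopologicalSpace Set

universe u

theorem constructible_nhd_aux {X : Type u} [TopologicalSpace X] (x : X) (O : Set X)
    (hO : @IsOpen X (constructibleTop X) O) :
    x ∈ O → ∃ U : Set X, IsOpen U ∧ x ∈ U ∧ U ∩ closure {x} ⊆ O := by
  change GenerateOpen _ O at hO
  induction hO with
  | basic s hs =>
    intro hx
    rcases hs with hs | hs
    · exact ⟨s, hs.1, hx, inter_subset_left⟩
    · refine ⟨univ, isOpen_univ, mem_univ _, fun y hy => ?_⟩
      have hc : IsClosed s := ⟨hs.1⟩
      exact closure_minimal (singleton_subset_iff.2 hx) hc hy.2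
  | univ => exact fun _ => ⟨Set.univ, isOpen_univ, mem_univ _, subset_univ _⟩
  | inter s t _ _ ihs iht =>
    intro hx
    obtain ⟨U, hU, hxU, hUs⟩ := ihs hx.1
    obtain ⟨U', hU', hxU', hUs'⟩ := iht hx.2
    exact ⟨U ∩ U', hU.inter hU', ⟨hxU, hxU'⟩,
      fun y hy => ⟨hUs ⟨hy.1.1, hy.2⟩, hUs' ⟨hy.1.2, hy.2⟩⟩⟩
  | sUnion S _ ih =>
    rintro ⟨s, hs, hxs⟩
    obtain ⟨U, hU, hxU, hUs⟩ := ih s hs hxs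
    exact ⟨U, hU, hxU, fun y hy => ⟨s, hs, hUs hy⟩⟩

theorem statement3 {X : Type u} [TopologicalSpace X] (hX : IsSpectralSpace X) (Y : Set X)
    (hY : @IsClosed X (constructibleTop X) Y) (V : Set Y) (hV : IsIrreducible V)
    (hVclosed : IsClosed V) :
    IsIrreducible (closure (((↑) : Y → X) '' V)) ∧
      ∃ (x : X) (hx : x ∈ Y), IsGenericPoint x (closure (((↑) : Y → X) '' V)) ∧
        (∀ x' : X, IsGenericPoint x' (closure (((↑) : Y → X) '' V)) → x' = x) ∧
        (⟨x, hx⟩ : Y) ∈ V ∧ V = closure {(⟨x, hx⟩ : Y)} := by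
  have hirr : IsIrreducible (closure (((↑) : Y → X) '' V)) :=
    (hV.image _ continuous_subtype_val.continuousOn).closure
  refine ⟨hirr, ?_⟩
  haveI := hX.quasiSober
  haveI := hX.t0Space
  obtain ⟨x, hx⟩ := QuasiSober.sober hirr isClosed_closure
  have hxW : x ∈ closure (((↑) : Y → X) '' V) := hx.mem
  have hxY : x ∈ Y := by
    by_contra hn
    have hYo : @IsOpen X (constructibleTop X) Yᶜ := hY.isOpen_compl
    obtain ⟨U, hU, hxU, hUY⟩ := constructible_nhd_aux x Yᶜ hYo hn
    obtain ⟨y, hyU, v, hv, rfl⟩ := mem_closure_iff.1 hxW U hU hxU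
    refine hUY ⟨hyU, ?_⟩ v.2
    rw [hx.def]
    exact subset_closure ⟨v, hv, rfl⟩
  have hVeq : V = ((↑) : Y → X) ⁻¹' closure (((↑) : Y → X) '' V) := by
    rw [← Topology.IsInducing.subtypeVal.closure_eq_preimage_closure_image, hVclosed.closure_eq]
  refine ⟨x, hxY, hx, fun x' hx' => hx'.eq hx, ?_, ?_⟩
  · rw [hVeq]; exact hxW
  · rw [Topology.IsInducing.subtypeVal.closure_eq_preimage_closure_image, image_singleton, hx.def]
    exact hVeq
end

section
/- Let X be a spectral space and Y a spectral subspace of X (i.e. Y carries the subspace topology, is spectral, and the inclusion Y → X is a spectral map). If a point y ∈ Y is visible as a point of X, then y is visible as a point of Y. In particular, if every point of X is visible then every point of Y is visible. -/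
open TopologicalSpace Set

universe u

theorem isThomason_preimage_aux {X Z : Type*} [TopologicalSpace X] [TopologicalSpace Z] {f : Z → X}
    (hf : IsSpectralMap f) {V : Set X} (hV : IsThomason V) : IsThomason (f ⁻¹' V) := by
  obtain ⟨S, hS, rfl⟩ := hV
  refine ⟨(fun C => f ⁻¹' C) '' S, ?_, ?_⟩
  · rintro _ ⟨C, hC, rfl⟩
    obtain ⟨h1, h2, h3⟩ := hS C hC
    exact ⟨h1.preimage hf.continuous, h2.preimage hf.continuous,
      hf.isCompact_preimage_of_isOpen h2 h3⟩
  · ext z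
    simp

theorem statement6 {X : Type u} [TopologicalSpace X] (hX : IsSpectralSpace X) (Y : Set X)
    (hY : IsSpectralSpace Y) (hincl : IsSpectralMap ((↑) : Y → X)) :
    (∀ y : Y, IsVisiblePoint ((y : X)) → IsVisiblePoint y) ∧
      ((∀ x : X, IsVisiblePoint x) → ∀ y : Y, IsVisiblePoint y) := by
  have key : ∀ y : Y, IsVisiblePoint ((y : X)) → IsVisiblePoint y := by
    rintro y ⟨V, W, hV, hW, h⟩
    refine ⟨_, _, isThomason_preimage_aux hincl hV, isThomason_preimage_aux hincl hW, ?_⟩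
    ext z
    have := Set.ext_iff.1 h (z : X)
    simpa [Subtype.ext_iff] using this
  exact ⟨key, fun h y => key y (h y)⟩
end

section
/- Let X be a noetherian spectral space. Then the Krull dimension function kdim_X : X → Ord is a dimension function on X: it takes no limit ordinal values, satisfies kdim_X y ≤ kdim_X x whenever y lies in the closure of {x}, and satisfies x = y whenever y lies in the closure of {x} and kdim_X y = kdim_X x. -/
open TopologicalSpace Set

universe u

theorem krullSet_zero' (X : Type u) [TopologicalSpace X] :
    krullSet X 0 = {x : X | IsClosed ({x} : Set X)} := by
  unfold krullSet; rw [Ordinal.limitRecOn_zero]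

theorem krullSet_succ' (X : Type u) [TopologicalSpace X] (α : Ordinal.{u}) :
    krullSet X (α + 1) = krullSet X α ∪ {x : X | x ∈ (krullSet X α)ᶜ ∧
      IsClosed {y : ((krullSet X α)ᶜ : Set X) | (y : X) = x}} := by
  unfold krullSet; rw [Ordinal.limitRecOn_add_one]

theorem krullSet_limit' (X : Type u) [TopologicalSpace X] (α : Ordinal.{u})
    (h : Order.IsSuccLimit α) :
    krullSet X α = ⋃ κ : Set.Iio α, krullSet X κ.1 := by
  unfold krullSet; rw [Ordinal.limitRecOn_limit _ _ _ _ h]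

theorem krullSet_mono' (X : Type u) [TopologicalSpace X] (β : Ordinal.{u}) :
    ∀ α ≤ β, krullSet X α ⊆ krullSet X β := by
  induction β using Ordinal.limitRecOn with
  | zero => intro α h; rw [nonpos_iff_eq_zero.mp h]
  | add_one β ih =>
    intro α h
    rcases h.lt_or_eq with h | rfl
    · rw [krullSet_succ']
      exact (ih α (Order.lt_add_one_iff.mp h)).trans subset_union_left
    · exact subset_rfl
  | limit β hβ ih =>
    intro α h
    rcases h.lt_or_eq with h | rfl
    · rw [krullSet_limit' X β hβ]
      exact subset_iUnion (fun κ : Set.Iio β => krullSet X κ.1) ⟨α, h⟩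
    · exact subset_rfl

theorem krullSet_key (X : Type u) [TopologicalSpace X] (x y : X)
    (hy : y ∈ closure ({x} : Set X)) (hne : y ≠ x) (α : Ordinal.{u}) :
    x ∈ krullSet X α → ∃ β < α, y ∈ krullSet X β := by
  induction α using Ordinal.limitRecOn with
  | zero =>
    intro h
    rw [krullSet_zero'] at h
    have h' : IsClosed ({x} : Set X) := h
    rw [h'.closure_eq] at hy
    exact absurd hy hne
  | add_one α ih =>
    intro h
    rw [krullSet_succ'] at h
    rcases h with h | ⟨h1, h2⟩
    · obtain ⟨β, hβ, h⟩ := ih h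
      exact ⟨β, hβ.trans (lt_add_one α), h⟩
    · refine ⟨α, lt_add_one α, ?_⟩
      by_contra hyS
      obtain ⟨C, hC, hCe⟩ := isClosed_induced_iff.mp h2
      have hx : (⟨x, h1⟩ : ((krullSet X α)ᶜ : Set X)) ∈ Subtype.val ⁻¹' C := by
        rw [hCe]; rfl
      have hxC : x ∈ C := hx
      have hyC : y ∈ C := closure_minimal (singleton_subset_iff.mpr hxC) hC hy
      have : (⟨y, hyS⟩ : ((krullSet X α)ᶜ : Set X)) ∈ Subtype.val ⁻¹' C := hyC
      rw [hCe] at this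
      exact hne this
  | limit α hα ih =>
    intro h
    rw [krullSet_limit' X α hα] at h
    obtain ⟨⟨κ, hκ⟩, h⟩ := mem_iUnion.mp h
    obtain ⟨β, hβ, h⟩ := ih κ hκ h
    exact ⟨β, hβ.trans hκ, h⟩

theorem krullSet_exhaust (X : Type u) [TopologicalSpace X] [T0Space X]
    [TopologicalSpace.NoetherianSpace X] (x : X) : ∃ α : Ordinal.{u}, x ∈ krullSet X α := by
  have wf : WellFounded (fun a b : X => Closeds.closure ({a} : Set X) < Closeds.closure {b}) :=
    InvImage.wf (fun a : X => Closeds.closure ({a} : Set X)) wellFounded_lt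
  induction x using wf.induction with
  | _ x ih =>
  have H : ∀ y : X, y ∈ closure ({x} : Set X) → y ≠ x → ∃ α : Ordinal.{u}, y ∈ krullSet X α := by
    intro y hy hne
    apply ih y
    have hle : closure ({y} : Set X) ⊆ closure {x} :=
      closure_minimal (singleton_subset_iff.mpr hy) isClosed_closure
    refine lt_of_le_of_ne hle fun he => hne ?_
    have he' : closure ({y} : Set X) = closure {x} := congrArg (fun C : Closeds X => (C : Set X)) he
    exact (inseparable_iff_closure_eq.mpr he').eq
  classical
  choose f hf using H
  let g : X → Ordinal.{u} := fun y =>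
    if h : y ∈ closure ({x} : Set X) ∧ y ≠ x then f y h.1 h.2 else 0
  have hg : ∀ y ∈ closure ({x} : Set X), y ≠ x → y ∈ krullSet X (⨆ z, g z) := by
    intro y hy hne
    refine krullSet_mono' X _ (g y) (Ordinal.le_iSup g y) ?_
    simp only [g, dif_pos (And.intro hy hne)]
    exact hf y hy hne
  refine ⟨(⨆ z, g z) + 1, ?_⟩
  rw [krullSet_succ']
  by_cases hx : x ∈ krullSet X (⨆ z, g z)
  · exact Or.inl hx
  · refine Or.inr ⟨hx, isClosed_induced_iff.mpr ⟨closure {x}, isClosed_closure, ?_⟩⟩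
    ext ⟨y, hy⟩
    constructor
    · intro h
      by_contra hne
      exact hy (hg y h hne)
    · intro h
      have h' : y = x := h
      subst h'
      exact subset_closure rfl

theorem statement9 {X : Type u} [TopologicalSpace X] (hX : IsSpectralSpace X)
    [TopologicalSpace.NoetherianSpace X] :
    IsDimensionFunction (kdim X) := by
  have := hX.t0Space
  have hmem : ∀ x : X, x ∈ krullSet X (kdim X x) := fun x =>
    csInf_mem (s := {α : Ordinal.{u} | x ∈ krullSet X α}) (krullSet_exhaust X x)
  have hle : ∀ (x : X) (α : Ordinal.{u}), x ∈ krullSet X α → kdim X x ≤ α := fun x α h =>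
    csInf_le' (s := {α : Ordinal.{u} | x ∈ krullSet X α}) h
  have hlt : ∀ x y : X, y ∈ closure ({x} : Set X) → y ≠ x → kdim X y < kdim X x := by
    intro x y hy hne
    obtain ⟨β, hβ, h⟩ := krullSet_key X x y hy hne _ (hmem x)
    exact (hle y β h).trans_lt hβ
  refine ⟨fun x hl => ?_, fun x y hy => ?_, fun x y hy he => ?_⟩
  · have h := hmem x
    rw [krullSet_limit' X _ hl] at h
    obtain ⟨⟨κ, hκ⟩, h⟩ := mem_iUnion.mp h
    exact absurd (hle x κ h) (not_le.mpr hκ)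
  · by_cases hne : y = x
    · rw [hne]
    · exact (hlt x y hy hne).le
  · by_contra hne
    exact absurd he (hlt x y hy (Ne.symm hne)).ne
end

section
/- Let X be a spectral space which has Cantor–Bendixson rank and let Y be a spectral subspace of X (i.e. Y carries the subspace topology, is spectral, and the inclusion Y → X is a spectral map). Then Y has Cantor–Bendixson rank. -/
open TopologicalSpace Set

universe u

theorem cbSet_zero' (X : Type u) [TopologicalSpace X] :
    cbSet X 0 = {x : X | IsOpen ({x} : Set X)} := by
  unfold cbSet; rw [Ordinal.limitRecOn_zero]

theorem cbSet_succ' (X : Type u) [TopologicalSpace X] (α : Ordinal.{u}) :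
    cbSet X (α + 1) = cbSet X α ∪
      {x : X | x ∈ (cbSet X α)ᶜ ∧ IsOpen {y : ((cbSet X α)ᶜ : Set X) | (y : X) = x}} := by
  unfold cbSet; rw [Ordinal.limitRecOn_add_one]

theorem cbSet_limit' (X : Type u) [TopologicalSpace X] (α : Ordinal.{u})
    (h : Order.IsSuccLimit α) : cbSet X α = ⋃ κ : Set.Iio α, cbSet X κ.1 := by
  unfold cbSet; rw [Ordinal.limitRecOn_limit _ _ _ _ h]

theorem cbSet_mono' (X : Type u) [TopologicalSpace X] (β : Ordinal.{u}) :
    ∀ α, α ≤ β → cbSet X α ⊆ cbSet X β := by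
  induction β using Ordinal.limitRecOn with
  | zero => intro α h; rw [nonpos_iff_eq_zero.1 h]
  | add_one β ih =>
    intro α h
    rcases h.lt_or_eq with h | h
    · refine (ih α (Order.lt_add_one_iff.1 h)).trans ?_
      rw [cbSet_succ' X β]
      exact subset_union_left
    · rw [h]
  | limit β hβ ih =>
    intro α h
    rcases h.lt_or_eq with h | h
    · rw [cbSet_limit' X β hβ]
      exact subset_iUnion (fun κ : Set.Iio β => cbSet X κ.1) ⟨α, h⟩
    · rw [h]

/-- Every nonempty subset has an isolated point. -/
theorem scattered_of_cb {X : Type u} [TopologicalSpace X] (S : Set X) (β : Ordinal.{u}) :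
    (S ∩ cbSet X β).Nonempty → ∃ x ∈ S, ∃ U : Set X, IsOpen U ∧ U ∩ S = {x} := by
  induction β using Ordinal.limitRecOn with
  | zero =>
    rintro ⟨x, hx, h⟩
    rw [cbSet_zero'] at h
    exact ⟨x, hx, {x}, h, by ext y; simp; rintro rfl; exact hx⟩
  | add_one β ih =>
    by_cases hne : (S ∩ cbSet X β).Nonempty
    · exact fun _ => ih hne
    rintro ⟨x, hx, h⟩
    rw [cbSet_succ' X β] at h
    rcases h with h | ⟨h, ho⟩
    · exact absurd ⟨x, hx, h⟩ hne
    · obtain ⟨U, hU, e⟩ := isOpen_induced_iff.1 ho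
      refine ⟨x, hx, U, hU, ?_⟩
      ext y
      constructor
      · rintro ⟨hyU, hyS⟩
        have hy : y ∈ (cbSet X β)ᶜ := fun hy => hne ⟨y, hyS, hy⟩
        have : (⟨y, hy⟩ : ((cbSet X β)ᶜ : Set X)) ∈ Subtype.val ⁻¹' U := hyU
        rw [e] at this
        exact this
      · rintro rfl
        have : (⟨y, h⟩ : ((cbSet X β)ᶜ : Set X)) ∈ Subtype.val ⁻¹' U := by rw [e]; rfl
        exact ⟨this, hx⟩
  | limit β hβ ih =>
    rintro ⟨x, hx, h⟩
    rw [cbSet_limit' X β hβ, mem_iUnion] at h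
    obtain ⟨⟨κ, hκ⟩, h⟩ := h
    exact ih κ hκ ⟨x, hx, h⟩

theorem cb_of_scattered {Y : Type u} [TopologicalSpace Y]
    (H : ∀ S : Set Y, S.Nonempty → ∃ x ∈ S, ∃ U : Set Y, IsOpen U ∧ U ∩ S = {x}) :
    HasCantorBendixsonRank Y := by
  by_contra hc
  have key : ∀ α : Ordinal.{u}, ∃ y, y ∉ cbSet Y α ∧ y ∈ cbSet Y (α + 1) := by
    intro α
    have hne : ((cbSet Y α)ᶜ).Nonempty := by
      rw [nonempty_compl]; exact fun h => hc ⟨α, h⟩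
    obtain ⟨x, hx, U, hU, e⟩ := H _ hne
    refine ⟨x, hx, ?_⟩
    rw [cbSet_succ']
    refine Or.inr ⟨hx, isOpen_induced_iff.2 ⟨U, hU, ?_⟩⟩
    ext ⟨y, hy⟩
    have : y ∈ U ∩ (cbSet Y α)ᶜ ↔ y = x := by rw [e]; rfl
    exact ⟨fun h => this.1 ⟨h, hy⟩, fun h => (this.2 h).1⟩
  choose f hf using key
  apply not_injective_of_ordinal f
  have aux : ∀ a b, a < b → f a ≠ f b := fun a b hab h =>
    (hf b).1 (h ▸ cbSet_mono' Y b _ (Order.add_one_le_of_lt hab) (hf a).2)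
  intro a b h
  rcases lt_trichotomy a b with hab | hab | hab
  · exact absurd h (aux _ _ hab)
  · exact hab
  · exact absurd h.symm (aux _ _ hab)

theorem statement13 {X : Type u} [TopologicalSpace X] (hX : IsSpectralSpace X)
    (hcb : HasCantorBendixsonRank X) (Y : Set X) (hY : IsSpectralSpace Y)
    (hincl : IsSpectralMap ((↑) : Y → X)) :
    HasCantorBendixsonRank Y := by
  obtain ⟨β, hβ⟩ := hcb
  apply cb_of_scattered
  rintro S ⟨s, hs⟩
  obtain ⟨x, ⟨y, hy, rfl⟩, U, hU, e⟩ := scattered_of_cb (Subtype.val '' S) β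
    ⟨s, ⟨s, hs, rfl⟩, by rw [hβ]; trivial⟩
  refine ⟨y, hy, Subtype.val ⁻¹' U, hU.preimage continuous_subtype_val, ?_⟩
  ext z
  have h : ∀ w : X, w ∈ U ∩ Subtype.val '' S ↔ w = y := by intro w; rw [e]; rfl
  constructor
  · rintro ⟨h1, h2⟩
    exact Subtype.ext ((h z).1 ⟨h1, z, h2, rfl⟩)
  · rintro rfl
    exact ⟨((h z).2 rfl).1, hy⟩
end

section
/- Let X be a topological space and Y a subspace of X, with Cantor–Bendixson filtrations X_{≤α} ⊆ X and Y_{≤α} ⊆ Y and complements X_{>α}, Y_{>α}. Then for every ordinal α there exists an ordinal α' ≥ α such that Y_{>α} ⊆ X_{>α'}. -/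
open TopologicalSpace Set

universe u

theorem cbSet_sub_aux {X : Type u} [TopologicalSpace X] (Y : Set X) (α : Ordinal.{u}) :
    ∀ y : Y, (y : X) ∈ cbSet X α → y ∈ cbSet (↥Y) α := by
  induction α using Ordinal.limitRecOn with
  | zero =>
    intro y hy
    simp only [cbSet, Ordinal.limitRecOn_zero, mem_ofPred_eq] at hy ⊢
    have := hy.preimage (continuous_subtype_val (p := fun x => x ∈ Y))
    convert this using 1
    ext z
    simp [Subtype.ext_iff]
  | add_one α ih =>
    intro y hy
    by_cases hc : y ∈ cbSet (↥Y) α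
    · simp only [cbSet, Ordinal.limitRecOn_add_one]
      exact Or.inl hc
    simp only [cbSet, Ordinal.limitRecOn_add_one] at hy ⊢
    rcases hy with hy | ⟨_, hy⟩
    · exact absurd (ih y hy) hc
    · refine Or.inr ⟨hc, ?_⟩
      change IsOpen {z : ((cbSet X α)ᶜ : Set X) | (z : X) = y} at hy
      change IsOpen {z : ((cbSet Y α)ᶜ : Set Y) | (z : Y) = y}
      let f : ((cbSet Y α)ᶜ : Set Y) → ((cbSet X α)ᶜ : Set X) :=
        fun z => ⟨(z : Y), fun h => z.2 (ih z h)⟩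
      have hf : Continuous f := by fun_prop
      convert hy.preimage hf using 1
      ext z
      simp [f, Subtype.ext_iff]
  | limit o ho ih =>
    intro y hy
    simp only [cbSet] at hy ⊢
    rw [Ordinal.limitRecOn_limit _ _ _ _ ho] at hy ⊢
    obtain ⟨κ, hκ⟩ := mem_iUnion.1 hy
    exact mem_iUnion.2 ⟨κ, ih κ.1 κ.2 y hκ⟩

theorem statement14 {X : Type u} [TopologicalSpace X] (Y : Set X) (α : Ordinal.{u}) :
    ∃ α' : Ordinal.{u}, α ≤ α' ∧ ∀ y : Y, y ∉ cbSet (↥Y) α → (y : X) ∉ cbSet X α' := by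
  exact ⟨α, le_rfl, fun y hy h => hy (cbSet_sub_aux Y α y h)⟩
end

section
/- Let R be a semi-artinian absolutely flat (von Neumann regular) commutative ring. Then the residue fields generate the unbounded derived category D(R): the smallest localizing subcategory of D(R) containing the objects k(P) = R_P for all prime ideals P of R is D(R) itself. -/
open CategoryTheory CategoryTheory.Limits CategoryTheory.Pretriangulated CategoryTheory.MonoidalCategory

universe w v u

/-- A commutative ring is absolutely flat (von Neumann regular) if every element `r`
satisfies `r = r ^ 2 * x` for some `x`. -/
def IsAbsolutelyFlat (R : Type u) [CommRing R] : Prop :=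
  ∀ r : R, ∃ x : R, r = r ^ 2 * x

/-- A commutative ring is semi-artinian if every nonzero homomorphic image of `R` in the
category of `R`-modules contains a simple submodule. -/
def IsSemiArtinianRing (R : Type u) [CommRing R] : Prop :=
  ∀ I : Ideal R, I ≠ ⊤ → ∃ S : Submodule R (R ⧸ I), IsSimpleModule R ↥S

/-- A localizing subcategory: a class of objects of a triangulated category closed under
isomorphisms, shifts, cones of morphisms, and arbitrary set-indexed coproducts. -/
structure IsLocalizingSubcategory {T : Type u} [Category.{v} T] [HasZeroObject T]
    [Preadditive T] [HasShift T ℤ] [∀ n : ℤ, (shiftFunctor T n).Additive] [Pretriangulated T]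
    (L : Set T) : Prop where
  mem_of_iso : ∀ {A B : T}, (A ≅ B) → A ∈ L → B ∈ L
  shift_mem : ∀ (A : T) (n : ℤ), A ∈ L → (A⟦n⟧ : T) ∈ L
  cone_mem : ∀ Tr : Triangle T, (Tr ∈ distTriang T) → Tr.obj₁ ∈ L → Tr.obj₂ ∈ L → Tr.obj₃ ∈ L
  coproduct_mem : ∀ {ι : Type w} (f : ι → T), (∀ i, f i ∈ L) →
    ∀ c : Cofan f, IsColimit c → c.pt ∈ L

/-- The smallest localizing subcategory containing a class of objects `S`. -/
def localizingClosure {T : Type u} [Category.{v} T] [HasZeroObject T]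
    [Preadditive T] [HasShift T ℤ] [∀ n : ℤ, (shiftFunctor T n).Additive] [Pretriangulated T]
    (S : Set T) : Set T :=
  ⋂₀ {L : Set T | IsLocalizingSubcategory.{w} L ∧ S ⊆ L}

/-- The residue field `k(P) = R_P` of an absolutely flat ring at a prime `P`, viewed as an
object of the derived category `D(R)`, placed in degree `0`. -/
noncomputable def residueFieldObj (R : Type u) [CommRing R]
    [HasDerivedCategory.{w} (ModuleCat.{u} R)] (P : PrimeSpectrum R) :
    DerivedCategory (ModuleCat.{u} R) :=
  (DerivedCategory.singleFunctor (ModuleCat.{u} R) 0).obj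
    (ModuleCat.of R (Localization.AtPrime P.asIdeal))

/-- Degreewise tensor product `R_P ⊗_R A` of a cochain complex `A` of `R`-modules with the
localization `R_P` (which is flat, so this computes the derived tensor product). -/
noncomputable def tensorResidueField (R : Type u) [CommRing R] (P : PrimeSpectrum R)
    (A : CochainComplex (ModuleCat.{u} R) ℤ) : CochainComplex (ModuleCat.{u} R) ℤ :=
  ((tensorLeft (ModuleCat.of R (Localization.AtPrime P.asIdeal))).mapHomologicalComplex
    (ComplexShape.up ℤ)).obj A

lemma reas {A : Type*} [Category* A] {X Y Z W T : A} {a : X ⟶ Y} {b : Y ⟶ Z} {c : X ⟶ W} {d : W ⟶ Z}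
    (h : a ≫ b = c ≫ d) (z : Z ⟶ T) : a ≫ b ≫ z = c ≫ d ≫ z := by
  rw [← Category.assoc, h, Category.assoc]

lemma reas0 {A : Type*} [Category* A] [HasZeroMorphisms A] {X Y Z T : A} {a : X ⟶ Y} {b : Y ⟶ Z}
    (h : a ≫ b = 0) (z : Z ⟶ T) : a ≫ b ≫ z = 0 := by
  rw [← Category.assoc, h, zero_comp]

lemma aux_sq {A : Type*} [Category* A] {Wi Wj Zi Zj Xi Xj : A} (w : Wi ⟶ Wj) (lj : Wj ⟶ Zj) (fj : Zj ⟶ Xj)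
    (li : Wi ⟶ Zi) (z : Zi ⟶ Zj) (kj : Wj ⟶ Xj) (ki : Wi ⟶ Xi) {fi : Zi ⟶ Xi} (x : Xi ⟶ Xj)
    (h1 : lj ≫ fj = kj) (h2 : li ≫ fi = ki) (h3 : z ≫ fj = fi ≫ x) (h4 : w ≫ kj = ki ≫ x) :
    (w ≫ lj) ≫ fj = (li ≫ z) ≫ fj := by
  rw [Category.assoc, Category.assoc, h1, h3, h4, ← h2, Category.assoc]

section PartOne

variable {A : Type*} [Category* A] [Abelian A] {J : Type*} [Category* J]
  [HasColimitsOfShape J A] [HasExactColimitsOfShape J A]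


lemma aux_cycles (F : J ⥤ HomologicalComplex A (ComplexShape.up ℤ)) (c : Cocone F) (hc : IsColimit c) (n : ℤ) :
    Nonempty (IsColimit ((HomologicalComplex.cyclesFunctor A (ComplexShape.up ℤ) n).mapCocone c)) := by
  let Z := HomologicalComplex.cyclesFunctor A (ComplexShape.up ℤ) n
  let ev (i : ℤ) := HomologicalComplex.eval A (ComplexShape.up ℤ) i
  have hev (i : ℤ) : IsColimit ((ev i).mapCocone c) := isColimitOfPreserves _ hc
  let f : F ⋙ Z ⟶ F ⋙ ev n :=
    { app := fun j => (F.obj j).iCycles n, naturality := fun i j φ => HomologicalComplex.cyclesMap_i (F.map φ) n }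
  let g : F ⋙ ev n ⟶ F ⋙ ev (n + 1) :=
    { app := fun j => (F.obj j).d n (n + 1), naturality := fun i j φ => (F.map φ).comm n (n+1) }
  let S : ShortComplex (J ⥤ A) := ShortComplex.mk f g (by
    ext j; exact (F.obj j).iCycles_d n (n+1))
  have hfm : ∀ j, Mono (f.app j) := fun j => inferInstanceAs (Mono ((F.obj j).iCycles n))
  have hmono : Mono f := NatTrans.mono_of_mono_app f
  have hS : S.Exact := by
    apply ShortComplex.exact_of_f_is_kernel
    refine KernelFork.IsLimit.ofι' _ _ (fun {W} k hk => ?_)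
    have hk' : ∀ j, k.app j ≫ (F.obj j).d n (n+1) = 0 := fun j => congr_app hk j
    refine ⟨{ app := fun j => (F.obj j).liftCycles (k.app j) (n+1) (by simp) (hk' j), naturality := ?_}, ?_⟩
    · intro i j φ
      refine (cancel_mono (f.app j)).1 ?_
      have h1 : ∀ j, (F.obj j).liftCycles (k.app j) (n+1) (by simp) (hk' j) ≫ f.app j = k.app j :=
        fun j => HomologicalComplex.liftCycles_i _ _ _ _ _
      exact aux_sq _ _ _ _ _ _ _ _ (h1 j) (h1 i) (f.naturality φ) (k.naturality φ)
    · ext j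
      exact HomologicalComplex.liftCycles_i _ _ _ (by simp) (hk' j)
  let c₁ := colimit.cocone (F ⋙ Z)
  let hc₁ : IsColimit c₁ := colimit.isColimit _
  let f' : c₁.pt ⟶ c.pt.X n := colimit.desc (F ⋙ Z) ⟨_, f ≫ ((ev n).mapCocone c).ι⟩
  have hf' : ∀ j, c₁.ι.app j ≫ f' = f.app j ≫ (c.ι.app j).f n := fun j =>
    colimit.ι_desc (F := F ⋙ Z) ⟨_, f ≫ ((ev n).mapCocone c).ι⟩ j
  have hg' : ∀ j, ((ev n).mapCocone c).ι.app j ≫ (c.pt.d n (n+1)) = S.g.app j ≫ ((ev (n+1)).mapCocone c).ι.app j :=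
    fun j => (c.ι.app j).comm n (n+1)
  have hm : Mono f' := colim.map_mono' f hc₁ (hev n) f' hf'
  have hex := colim.exact_mapShortComplex hS hc₁ (hev n)
     (hev (n+1)) f' (c.pt.d n (n+1)) hf' hg'
  have : Mono (colim.mapShortComplex S hc₁ ((ev n).mapCocone c)
    ((ev (n+1)).mapCocone c) f' (c.pt.d n (n+1)) hf' hg').f := hm
  have hk := hex.fIsKernel
  have hk' := c.pt.cyclesIsKernel n (n+1) (by simp)
  have e : c₁ ≅ Z.mapCocone c := Cocone.ext
    (IsLimit.conePointUniqueUpToIso hk hk') (by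
      intro j
      refine (cancel_mono (c.pt.iCycles n)).1 ?_
      have := IsLimit.conePointUniqueUpToIso_hom_comp hk hk' .zero
      refine (Category.assoc _ _ _).trans ?_
      refine (congrArg (c₁.ι.app j ≫ ·) this).trans ?_
      exact (hf' j).trans (HomologicalComplex.cyclesMap_i (c.ι.app j) n).symm)
  exact ⟨hc₁.ofIsoColimit e⟩

lemma aux_homology (F : J ⥤ HomologicalComplex A (ComplexShape.up ℤ)) (c : Cocone F) (hc : IsColimit c) (n : ℤ) :
    Nonempty (IsColimit
      ((HomologicalComplex.homologyFunctor A (ComplexShape.up ℤ) n).mapCocone c)) := by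
  obtain ⟨hZ⟩ := aux_cycles F c hc n
  have hX : IsColimit ((HomologicalComplex.eval A (ComplexShape.up ℤ) (n-1)).mapCocone c) :=
    isColimitOfPreserves _ hc
  let π : HomologicalComplex.cyclesFunctor A (ComplexShape.up ℤ) n ⟶
    HomologicalComplex.homologyFunctor A (ComplexShape.up ℤ) n :=
    HomologicalComplex.natTransHomologyπ A _ n
  have hfac (s : Cocone (F ⋙ HomologicalComplex.homologyFunctor A (ComplexShape.up ℤ) n)) (j : J) :
     HomologicalComplex.cyclesMap (c.ι.app j) n ≫ hZ.desc ⟨s.pt, Functor.whiskerLeft F π ≫ s.ι⟩ =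
      (F.obj j).homologyπ n ≫ s.ι.app j := hZ.fac ⟨s.pt, Functor.whiskerLeft F π ≫ s.ι⟩ j
  have hd (s : Cocone (F ⋙ HomologicalComplex.homologyFunctor A (ComplexShape.up ℤ) n)) :
      c.pt.toCycles (n-1) n ≫ hZ.desc ⟨s.pt, Functor.whiskerLeft F π ≫ s.ι⟩ = 0 := by
    apply hX.hom_ext
    intro j
    have h1 : (c.ι.app j).f (n-1) ≫ c.pt.toCycles (n-1) n =
      (F.obj j).toCycles (n-1) n ≫ HomologicalComplex.cyclesMap (c.ι.app j) n := by
      refine (cancel_mono (c.pt.iCycles n)).1 ?_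
      simp
    change (c.ι.app j).f (n-1) ≫ c.pt.toCycles (n-1) n ≫ hZ.desc ⟨s.pt, Functor.whiskerLeft F π ≫ s.ι⟩ =
      (c.ι.app j).f (n-1) ≫ 0
    have := (F.obj j).toCycles_comp_homologyπ (n-1) n
    exact (reas h1 _).trans ((congrArg _ (hfac s j)).trans
      ((reas0 this _).trans comp_zero.symm))
  have hd' (s : Cocone (F ⋙ HomologicalComplex.homologyFunctor A (ComplexShape.up ℤ) n)) :
      ∃ l : c.pt.homology n ⟶ s.pt,
      c.pt.homologyπ n ≫ l = hZ.desc ⟨s.pt, Functor.whiskerLeft F π ≫ s.ι⟩ :=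
    ⟨_, (CokernelCofork.IsColimit.desc' (c.pt.homologyIsCokernel (n-1) n (by simp)) _ (hd s)).2⟩
  choose D hD using hd'
  refine ⟨{
    desc := fun s => D s
    fac := fun s j => ?_
    uniq := fun s m hm => ?_ }⟩
  · refine (cancel_epi ((F.obj j).homologyπ n)).1 ?_
    change (F.obj j).homologyπ n ≫ HomologicalComplex.homologyMap (c.ι.app j) n ≫ D s = _
    have := HomologicalComplex.homologyπ_naturality (c.ι.app j) n
    exact (reas this (D s)).trans ((congrArg _ (hD s)).trans (hfac s j))
  · refine (cancel_epi (c.pt.homologyπ n)).1 ?_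
    refine Eq.trans ?_ (hD s).symm
    apply hZ.hom_ext
    intro j
    refine Eq.trans ?_ (hfac s j).symm
    have := HomologicalComplex.homologyπ_naturality (c.ι.app j) n
    exact (reas this m).symm.trans (congrArg _ (hm j))

end PartOne

section PartTwo

variable {A : Type*} [Category* A] [Abelian A] {ι : Type*}
  [HasColimitsOfShape (Discrete ι) A] [HasExactColimitsOfShape (Discrete ι) A]

lemma aux_quasiIso {K L : ι → HomologicalComplex A (ComplexShape.up ℤ)} (s : ∀ i, K i ⟶ L i) (hs : ∀ i, QuasiIso (s i))
    (cK : Cofan K) (hK : IsColimit cK) (cL : Cofan L) (hL : IsColimit cL) (φ : cK.pt ⟶ cL.pt)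
    (hφ : ∀ i, cK.inj i ≫ φ = s i ≫ cL.inj i) : QuasiIso φ := by
  rw [quasiIso_iff]
  intro n
  rw [quasiIsoAt_iff_isIso_homologyMap]
  obtain ⟨hK'⟩ := aux_homology _ cK hK n
  obtain ⟨hL'⟩ := aux_homology _ cL hL n
  let H := HomologicalComplex.homologyFunctor A (ComplexShape.up ℤ) n
  have hi (i) : IsIso (H.map (s i)) := by
    have := (hs i).quasiIsoAt n
    rw [quasiIsoAt_iff_isIso_homologyMap] at this
    exact this
  let e : Discrete.functor K ⋙ H ≅ Discrete.functor L ⋙ H :=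
    Discrete.natIso (fun i => @asIso _ _ _ _ (H.map (s i.as)) (hi i.as))
  have : HomologicalComplex.homologyMap φ n = (IsColimit.coconePointsIsoOfNatIso hK' hL' e).hom := by
    apply hK'.hom_ext
    intro i
    refine Eq.trans ?_ (IsColimit.comp_coconePointsIsoOfNatIso_hom hK' hL' e i).symm
    refine (H.map_comp (cK.inj i.as) φ).symm.trans ?_
    refine (congrArg _ (hφ i.as)).trans ?_
    exact H.map_comp _ _
  rw [this]
  exact Iso.isIso_hom (IsColimit.coconePointsIsoOfNatIso hK' hL' e)

lemma aux_homotopy {K : ι → HomologicalComplex A (ComplexShape.up ℤ)}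
    (cK : Cofan K) (hK : IsColimit cK) (Y : HomologicalComplex A (ComplexShape.up ℤ)) (g : cK.pt ⟶ Y)
    (h : ∀ i, Homotopy (cK.inj i ≫ g) 0) : Nonempty (Homotopy g 0) := by
  have hev (p : ℤ) : IsColimit ((HomologicalComplex.eval A (ComplexShape.up ℤ) p).mapCocone cK) :=
    isColimitOfPreserves _ hK
  have ex (p q : ℤ) : ∃ l : cK.pt.X p ⟶ Y.X q, ∀ i, (cK.inj i).f p ≫ l = (h i).hom p q :=
    ⟨(hev p).desc ⟨_, Discrete.natTrans (fun i => (h i.as).hom p q)⟩, fun i => (hev p).fac _ _⟩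
  have hext (p q : ℤ) (l l' : cK.pt.X p ⟶ Y.X q) (hh : ∀ i, (cK.inj i).f p ≫ l = (cK.inj i).f p ≫ l') : l = l' :=
    (hev p).hom_ext (fun i => hh i.as)
  choose l hl using ex
  refine ⟨{ hom := l, zero := ?_, comm := ?_}⟩
  · intro p q hpq
    apply hext
    intro i
    rw [hl, (h i).zero _ _ hpq, comp_zero]
  · intro p
    apply hext
    intro i
    have := (h i).comm p
    rw [dNext_eq _ (show (ComplexShape.up ℤ).Rel p (p+1) by simp),
      prevD_eq _ (show (ComplexShape.up ℤ).Rel (p-1) p by simp)] at this ⊢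
    simp only [HomologicalComplex.comp_f] at this
    rw [this, Preadditive.comp_add, Preadditive.comp_add, reassoc_of% (hl p (p-1) i),
      HomologicalComplex.Hom.comm_assoc, hl]
    simp

end PartTwo
section PartTwoB
variable {A : Type*} [Category* A] [Abelian A] [HasDerivedCategory A]

open DerivedCategory

lemma aux_Qzero {X Y : CochainComplex A ℤ} (g : X ⟶ Y) (hg : (Q.map g : Q.obj X ⟶ Q.obj Y) = 0) :
    ∃ (X' : CochainComplex A ℤ) (s : X' ⟶ X), IsIso (Q.map s) ∧ Nonempty (Homotopy (s ≫ g) 0) := by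
  have h0 : Qh.map ((HomotopyCategory.quotient _ _).map g) = Qh.map 0 := by
    rw [← cancel_mono ((quotientCompQhIso A).hom.app Y), quotientCompQhIso_hom_naturality, hg]
    simp
  obtain ⟨X', s, hs, h⟩ := (MorphismProperty.map_eq_iff_precomp Qh (HomotopyCategory.quasiIso A _) _ _).1 h0
  obtain ⟨X', rfl⟩ := HomotopyCategory.quotient_obj_surjective X'
  obtain ⟨s, rfl⟩ := (HomotopyCategory.quotient _ _).map_surjective s
  rw [← isIso_Qh_map_iff] at hs
  refine ⟨X', s, hs, ⟨HomotopyCategory.homotopyOfEq _ _ ?_⟩⟩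
  rw [Functor.map_comp, h]
  simp


variable {ι : Type*}
  [HasColimitsOfShape (Discrete ι) A] [HasExactColimitsOfShape (Discrete ι) A]

lemma aux_Qhom_ext {K : ι → CochainComplex A ℤ} (c : Cofan K) (hc : IsColimit c) {Y : DerivedCategory A}
    (f : Q.obj c.pt ⟶ Y) (hf : ∀ i, Q.map (c.inj i) ≫ f = 0) : f = 0 := by
  obtain ⟨Y, ⟨e⟩⟩ : ∃ Y0, Nonempty (Q.obj Y0 ≅ Y) := ⟨_, ⟨Q.objObjPreimageIso Y⟩⟩
  rw [← cancel_mono e.inv, zero_comp]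
  have hf' : ∀ i, Q.map (c.inj i) ≫ f ≫ e.inv = 0 := fun i => by rw [← Category.assoc, hf, zero_comp]
  obtain ⟨Y', g, s, hs, h⟩ := left_fac (f ≫ e.inv)
  rw [h] at hf' ⊢
  have h0 : ∀ i, Q.map (c.inj i ≫ g) = 0 := fun i => by
    have := hf' i
    rw [← Category.assoc] at this
    rw [← cancel_mono (inv (Q.map s)), Q.map_comp, this, zero_comp]
  choose X' s' hs' hh using fun i => aux_Qzero _ (h0 i)
  have hh' := fun i => (hh i).some
  let c' : Cofan X' := Cofan.mk (∐ X') (Sigma.ι X')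
  let hc' : IsColimit c' := coproductIsCoproduct X'
  let S : c'.pt ⟶ c.pt := Cofan.IsColimit.desc hc' (fun i => s' i ≫ c.inj i)
  have hS : ∀ i, c'.inj i ≫ S = s' i ≫ c.inj i := fun i => Cofan.IsColimit.fac hc' _ i
  have hq : QuasiIso S := aux_quasiIso s' (fun i => (isIso_Q_map_iff_quasiIso _ _).1 (hs' i)) c' hc' c hc S hS
  have hSg : Nonempty (Homotopy (S ≫ g) 0) := by
    apply aux_homotopy c' hc'
    intro i
    refine (Homotopy.ofEq ?_).trans (hh' i)
    rw [← Category.assoc, hS, Category.assoc]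
  have : IsIso (Q.map S) := (isIso_Q_map_iff_quasiIso _ _).2 hq
  have h2 : Q.map S ≫ Q.map g = 0 := by
    rw [← Q.map_comp, Q_map_eq_of_homotopy _ hSg.some, Q.map_zero]
  have h3 : Q.map g = 0 := by
    rw [← cancel_epi (Q.map S), h2, comp_zero]
  rw [h3, zero_comp]

lemma aux_Qdesc {K : ι → CochainComplex A ℤ} (c : Cofan K) (hc : IsColimit c) {Y : DerivedCategory A}
    (f : ∀ i, Q.obj (K i) ⟶ Y) : ∃ l : Q.obj c.pt ⟶ Y, ∀ i, Q.map (c.inj i) ≫ l = f i := by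
  obtain ⟨Y, ⟨e⟩⟩ : ∃ Y0, Nonempty (Q.obj Y0 ≅ Y) := ⟨_, ⟨Q.objObjPreimageIso Y⟩⟩
  choose X' s' hs' g h using fun i => right_fac (f i ≫ e.inv)
  let c' : Cofan X' := Cofan.mk (∐ X') (Sigma.ι X')
  let hc' : IsColimit c' := coproductIsCoproduct X'
  let S : c'.pt ⟶ c.pt := Cofan.IsColimit.desc hc' (fun i => s' i ≫ c.inj i)
  have hS : ∀ i, c'.inj i ≫ S = s' i ≫ c.inj i := fun i => Cofan.IsColimit.fac hc' _ i
  let G : c'.pt ⟶ Y := Cofan.IsColimit.desc hc' g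
  have hG : ∀ i, c'.inj i ≫ G = g i := fun i => Cofan.IsColimit.fac hc' _ i
  have hq : QuasiIso S := aux_quasiIso s' (fun i => (isIso_Q_map_iff_quasiIso _ _).1 (hs' i)) c' hc' c hc S hS
  have : IsIso (Q.map S) := (isIso_Q_map_iff_quasiIso _ _).2 hq
  refine ⟨inv (Q.map S) ≫ Q.map G ≫ e.hom, fun i => ?_⟩
  have h1 : Q.map (c.inj i) ≫ inv (Q.map S) = inv (Q.map (s' i)) ≫ Q.map (c'.inj i) := by
    rw [IsIso.comp_inv_eq, Category.assoc, ← Q.map_comp, hS, Q.map_comp, IsIso.inv_hom_id_assoc]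
  rw [reassoc_of% h1, ← Q.map_comp_assoc, hG]
  have := h i
  rw [← Category.assoc, ← this]
  simp

lemma aux_Qcolim {K : ι → CochainComplex A ℤ} (c : Cofan K) (hc : IsColimit c) :
    Nonempty (IsColimit (Cofan.mk (Q.obj c.pt) (fun i => Q.map (c.inj i)))) := by
  choose D hD using fun (s : Cofan (fun i => Q.obj (K i))) => aux_Qdesc c hc (fun i => s.inj i)
  refine ⟨Cofan.IsColimit.mk _ (fun s => D s) (fun s i => hD s i) (fun s m hm => ?_)⟩
  rw [← sub_eq_zero]
  apply aux_Qhom_ext c hc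
  intro i
  have := hm i
  rw [Preadditive.comp_sub, hD, sub_eq_zero]
  exact this

/-- for any family in `D`, there is a nice coproduct. -/
lemma aux_Dcoprod (X : ι → DerivedCategory A) :
    ∃ (c : Cofan X), Nonempty (IsColimit c) ∧ ∀ (n : ℤ) (T : A) (f : (homologyFunctor A n).obj c.pt ⟶ T),
      (∀ i, (homologyFunctor A n).map (c.inj i) ≫ f = 0) → f = 0 := by
  let K := fun i => Q.objPreimage (X i)
  let e : ∀ i, Q.obj (K i) ≅ X i := fun i => Q.objObjPreimageIso (X i)
  let c := Cofan.mk (∐ K) (Sigma.ι K)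
  obtain ⟨h⟩ := aux_Qcolim c (coproductIsCoproduct K)
  refine ⟨Cofan.mk (Q.obj c.pt) (fun i => (e i).inv ≫ Q.map (c.inj i)), ⟨Cofan.IsColimit.mk _
    (fun s => Cofan.IsColimit.desc h (fun i => (e i).hom ≫ s.inj i)) (fun s i => ?_) (fun s m hm => ?_)⟩, ?_⟩
  · have := Cofan.IsColimit.fac h (fun i => (e i).hom ≫ s.inj i) i
    dsimp at this ⊢
    rw [Category.assoc, this, Iso.inv_hom_id_assoc]
  · apply Cofan.IsColimit.hom_ext h
    intro i
    rw [Cofan.IsColimit.fac, ← hm i]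
    simp
  · intro n T f hf
    obtain ⟨hH⟩ := aux_homology _ c (coproductIsCoproduct K) n
    rw [← cancel_epi ((homologyFunctorFactors A n).inv.app c.pt), comp_zero]
    apply hH.hom_ext
    intro ⟨i⟩
    have h1 := hf i
    have h2 := (homologyFunctorFactors A n).inv.naturality (c.inj i)
    have h3 : (homologyFunctor A n).map (Q.map (c.inj i)) ≫ f = 0 := by
      have h1 : (homologyFunctor A n).map ((e i).inv ≫ Q.map (c.inj i)) ≫ f = 0 := h1
      rw [Functor.map_comp, Category.assoc] at h1
      rw [← cancel_epi ((homologyFunctor A n).map (e i).inv), h1, comp_zero]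
    exact (reas h2 f).trans ((congrArg _ h3).trans (comp_zero.trans comp_zero.symm))

instance aux_hasCoprod : HasColimitsOfShape (Discrete ι) (DerivedCategory A) :=
  ⟨fun F => by
    obtain ⟨c, ⟨h⟩, _⟩ := aux_Dcoprod (F.obj ∘ Discrete.mk)
    have : HasColimit (Discrete.functor (F.obj ∘ Discrete.mk)) := ⟨⟨c, h⟩⟩
    exact hasColimit_of_iso Discrete.natIsoFunctor⟩

lemma aux_Dhom_ext {X : ι → DerivedCategory A} (c : Cofan X) (hc : IsColimit c) (n : ℤ) (T : A)
    (f : (homologyFunctor A n).obj c.pt ⟶ T)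
    (hf : ∀ i, (homologyFunctor A n).map (c.inj i) ≫ f = 0) : f = 0 := by
  obtain ⟨c', ⟨h⟩, H⟩ := aux_Dcoprod X
  let e := IsColimit.coconePointUniqueUpToIso h hc
  rw [← cancel_epi ((homologyFunctor A n).map e.hom), comp_zero]
  apply H
  intro i
  rw [← Functor.map_comp_assoc]
  have : c'.inj i ≫ e.hom = c.inj i := IsColimit.comp_coconePointUniqueUpToIso_hom h hc _
  rw [this, hf]

lemma aux_single {M : ι → A} (c : Cofan M) (hc : IsColimit c) (n : ℤ) :
    Nonempty (IsColimit (Cofan.mk ((singleFunctor A n).obj c.pt) (fun i => (singleFunctor A n).map (c.inj i)))) := by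
  let σ := CochainComplex.singleFunctor A n
  have hp : IsColimit ((HomologicalComplex.single A (ComplexShape.up ℤ) n).mapCocone c) := isColimitOfPreserves _ hc
  let c' : Cofan (fun i => σ.obj (M i)) := Cofan.mk (σ.obj c.pt) (fun i => σ.map (c.inj i))
  have hc' : IsColimit c' := Cofan.IsColimit.mk _ (fun s => hp.desc ⟨s.pt, Discrete.natTrans (fun i => s.inj i.as)⟩)
    (fun s i => hp.fac _ _) (fun s m hm => hp.uniq ⟨s.pt, Discrete.natTrans (fun i => s.inj i.as)⟩ m (fun i => hm i.as))
  exact aux_Qcolim c' hc'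
end PartTwoB

section PartThree

open Opposite

variable {C : Type*} [Category* C] [HasZeroObject C] [HasShift C ℤ]
  [Preadditive C] [∀ (n : ℤ), (shiftFunctor C n).Additive] [Pretriangulated C]

lemma aux_unop_colim {ι : Type*} (X : ι → C) (Y : Cᵒᵖ) (p : ∀ i, Y ⟶ op (X i)) (h : IsLimit (Fan.mk Y p)) :
    Nonempty (IsColimit (Cofan.mk Y.unop (fun i => (p i).unop) : Cofan X)) := by
  refine ⟨Cofan.IsColimit.mk _ (fun s => (Fan.IsLimit.lift h (fun i => (s.inj i).op)).unop) (fun s i => ?_)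
    (fun s m hm => ?_)⟩
  · exact congrArg Quiver.Hom.unop (Fan.IsLimit.fac h (fun i => (s.inj i).op) i)
  · apply Quiver.Hom.op_inj
    apply Fan.IsLimit.hom_ext h
    intro i
    refine Eq.trans ?_ (Fan.IsLimit.fac h (fun i => (s.inj i).op) i).symm
    exact congrArg Quiver.Hom.op (hm i)

open Opposite in
lemma aux_trW_coprod (P : ObjectProperty C) {ι : Type*} [HasColimitsOfShape (Discrete ι) C]
    (hP : ∀ (X : ι → C) (c : Cofan X), IsColimit c → (∀ i, P (X i)) → P c.pt)
    {X Y : ι → C} (f : ∀ i, X i ⟶ Y i) (hf : ∀ i, P.trW (f i))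
    (cX : Cofan X) (hX : IsColimit cX) (cY : Cofan Y) (hY : IsColimit cY) (φ : cX.pt ⟶ cY.pt)
    (hφ : ∀ i, cX.inj i ≫ φ = f i ≫ cY.inj i) : P.trW φ := by
  simp only [ObjectProperty.trW_iff] at hf
  choose Z g h hT hZ using hf
  have := fun i => op_distinguished _ (hT i)
  have hS := productTriangle_distinguished _ this
  have hU := unop_distinguished _ hS
  obtain ⟨lX⟩ := aux_unop_colim X _ _ (productIsProduct (fun i => op (X i)))
  obtain ⟨lY⟩ := aux_unop_colim Y _ _ (productIsProduct (fun i => op (Y i)))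
  obtain ⟨lZ⟩ := aux_unop_colim Z _ _ (productIsProduct (fun i => op (Z i)))
  have hPZ := hP _ _ lZ hZ
  let u : unop (∏ᶜ (fun i => op (X i))) ⟶ unop (∏ᶜ (fun i => op (Y i))) :=
    (Limits.Pi.map (fun i => (f i).op)).unop
  have hu : P.trW u := ⟨_, _, _, hU, hPZ⟩
  let eX := IsColimit.coconePointUniqueUpToIso lX hX
  let eY := IsColimit.coconePointUniqueUpToIso lY hY
  have e : Arrow.mk u ≅ Arrow.mk φ := Arrow.isoMk eX eY (by
    apply Cofan.IsColimit.hom_ext lX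
    intro i
    have h1 : (Pi.π (fun i => op (X i)) i).unop ≫ eX.hom = cX.inj i := IsColimit.comp_coconePointUniqueUpToIso_hom lX hX ⟨i⟩
    have h2 : (Pi.π (fun i => op (Y i)) i).unop ≫ eY.hom = cY.inj i := IsColimit.comp_coconePointUniqueUpToIso_hom lY hY ⟨i⟩
    have h3 : (Pi.π (fun i => op (X i)) i).unop ≫ u = f i ≫ (Pi.π (fun i => op (Y i)) i).unop :=
      congrArg Quiver.Hom.unop (Limits.Pi.map_π (fun i => (f i).op) i)
    change (Pi.π (fun i => op (X i)) i).unop ≫ eX.hom ≫ φ = (Pi.π (fun i => op (X i)) i).unop ≫ u ≫ eY.hom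
    rw [reassoc_of% h1, reassoc_of% h3, h2, hφ])
  exact (P.trW.arrow_mk_iso_iff e).1 hu

end PartThree

section PartThreeB
variable {C : Type*} [Category* C] [HasZeroObject C] [HasShift C ℤ]
  [Preadditive C] [∀ (n : ℤ), (shiftFunctor C n).Additive] [Pretriangulated C]

lemma aux_cofib (P : ObjectProperty C) [P.IsClosedUnderIsomorphisms]
    (X : C) (c : Cofan (fun _ : ℕ => X)) (hc : IsColimit c)
    (t : c.pt ⟶ c.pt) (ht : ∀ n, c.inj n ≫ t = c.inj n - c.inj (n+1)) (h : P.trW t) : P X := by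
  obtain ⟨Z, g, h, hT, hZ⟩ := h
  let a : c.pt ⟶ c.pt := Cofan.IsColimit.desc hc (fun n => ∑ k ∈ Finset.range n, c.inj k)
  have ha : ∀ n, c.inj n ≫ a = ∑ k ∈ Finset.range n, c.inj k := fun n => Cofan.IsColimit.fac hc _ n
  let d : c.pt ⟶ X := Cofan.IsColimit.desc hc (fun n => 𝟙 X)
  have hd : ∀ n, c.inj n ≫ d = 𝟙 X := fun n => Cofan.IsColimit.fac hc _ n
  have h1 : t ≫ a = - 𝟙 _ := by
    apply Cofan.IsColimit.hom_ext hc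
    intro n
    rw [reassoc_of% (ht n), Preadditive.sub_comp, ha, ha, Finset.sum_range_succ]
    simp
  have h2 : a ≫ t = d ≫ c.inj 0 - 𝟙 _ := by
    apply Cofan.IsColimit.hom_ext hc
    intro n
    rw [reassoc_of% (ha n), Preadditive.sum_comp, Preadditive.comp_sub, reassoc_of% (hd n)]
    simp only [ht]
    rw [Finset.sum_range_sub']
    simp
  have hm : Mono t := by
    have : t ≫ (-a) = 𝟙 _ := by rw [Preadditive.comp_neg, h1, neg_neg]
    have : SplitMono t := ⟨-a, this⟩
    exact this.mono
  have h0 : h = 0 := (Triangle.mor₃_eq_zero_iff_mono₁ _ hT).2 hm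
  have hg : Epi g := (Triangle.mor₃_eq_zero_iff_epi₂ _ hT).1 h0
  have htg : t ≫ g = 0 := comp_distTriang_mor_zero₁₂ _ hT
  obtain ⟨q, hq⟩ : ∃ q : Z ⟶ X, d = g ≫ q := Triangle.yoneda_exact₂ _ hT d (by
    apply Cofan.IsColimit.hom_ext hc
    intro n
    change c.inj n ≫ t ≫ d = _
    rw [reassoc_of% (ht n), Preadditive.sub_comp, hd, hd, sub_self]
    exact comp_zero.symm)
  refine P.prop_of_iso (Iso.mk q (c.inj 0 ≫ g) ?_ ?_) hZ
  · rw [← cancel_epi g, ← Category.assoc, ← hq]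
    have := h2 =≫ g
    rw [Category.assoc, htg, comp_zero, Preadditive.sub_comp, eq_comm, sub_eq_zero, Category.assoc] at this
    rw [this]
    simp
  · rw [Category.assoc, ← hq, hd]

lemma aux_octa [IsTriangulated C] (P : ObjectProperty C) [P.IsTriangulated] [P.IsClosedUnderIsomorphisms]
    {X Y Z : C} (f : X ⟶ Y) (g : Y ⟶ Z) (hg : P.trW g) (hfg : P.trW (f ≫ g)) : P.trW f := by
  obtain ⟨A, a, a', hA⟩ := distinguished_cocone_triangle f
  obtain ⟨B, b, b', hB, hPB⟩ := hg
  obtain ⟨D, d, d', hD, hPD⟩ := hfg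
  have o := Triangulated.someOctahedron rfl hA hB hD
  exact ⟨_, _, _, hA, P.ext_of_isTriangulatedClosed₁ _ o.mem hPD hPB⟩

lemma aux_tower [IsTriangulated C] (P : ObjectProperty C) [P.IsTriangulated] [P.IsClosedUnderIsomorphisms]
    [HasColimitsOfShape (Discrete ℕ) C]
    (hP : ∀ (X : ℕ → C) (c : Cofan X), IsColimit c → (∀ i, P (X i)) → P c.pt)
    (X : ℕ → C) (s : ∀ n, X n ⟶ X (n+1)) (hs : ∀ n, P.trW (s n))
    (c : Cofan X) (hc : IsColimit c) (t : c.pt ⟶ c.pt) (ht : ∀ n, c.inj n ≫ t = c.inj n - s n ≫ c.inj (n+1))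
    (hi : IsIso t) : P (X 0) := by
  let u : ∀ n, X 0 ⟶ X n := fun n => Nat.rec (𝟙 _) (fun n v => v ≫ s n) n
  have hu0 : u 0 = 𝟙 _ := rfl
  have hu1 : ∀ n, u (n+1) = u n ≫ s n := fun n => rfl
  have hu : ∀ n, P.trW (u n) := by
    intro n
    induction n with
    | zero => rw [hu0]; exact P.trW.id_mem _
    | succ n ih => rw [hu1]; exact P.trW.comp_mem _ _ ih (hs n)
  let X0 : ℕ → C := fun _ => X 0
  let c0 : Cofan X0 := Cofan.mk (∐ X0) (Sigma.ι X0)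
  let hc0 : IsColimit c0 := coproductIsCoproduct X0
  let U : c0.pt ⟶ c.pt := Cofan.IsColimit.desc hc0 (fun n => u n ≫ c.inj n)
  have hU : ∀ n, c0.inj n ≫ U = u n ≫ c.inj n := fun n => Cofan.IsColimit.fac hc0 _ n
  have hUW : P.trW U := aux_trW_coprod P hP u hu c0 hc0 c hc U hU
  let t0 : c0.pt ⟶ c0.pt := Cofan.IsColimit.desc hc0 (fun n => c0.inj n - c0.inj (n+1))
  have ht0 : ∀ n, c0.inj n ≫ t0 = c0.inj n - c0.inj (n+1) := fun n => Cofan.IsColimit.fac hc0 _ n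
  have comm : t0 ≫ U = U ≫ t := by
    apply Cofan.IsColimit.hom_ext hc0
    intro n
    rw [reassoc_of% (ht0 n), reassoc_of% (hU n), ht, Preadditive.sub_comp, hU, hU, hu1]
    simp
  refine aux_cofib P (X 0) c0 hc0 t0 ht0 (aux_octa P t0 U hUW ?_)
  rw [comm]
  exact P.trW.comp_mem _ _ hUW (P.trW_of_isIso t)
end PartThreeB

section PartThreeC
variable {A : Type*} [Category* A] [Abelian A] [HasDerivedCategory A]
  [HasColimitsOfShape (Discrete ℕ) A] [HasExactColimitsOfShape (Discrete ℕ) A]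
open DerivedCategory

lemma aux_class (P : ObjectProperty (DerivedCategory A)) [P.IsTriangulated] [P.IsClosedUnderIsomorphisms]
    (hP : ∀ (X : ℕ → DerivedCategory A) (c : Cofan X), IsColimit c → (∀ i, P (X i)) → P c.pt)
    (Cl : ObjectProperty (DerivedCategory A))
    (hCl : ∀ X, Cl X → ∃ (Y X' : DerivedCategory A) (f : Y ⟶ X) (g : X ⟶ X') (h : X' ⟶ Y⟦(1 : ℤ)⟧),
      Triangle.mk f g h ∈ distTriang _ ∧ P Y ∧ Cl X' ∧ ∀ n : ℤ, Epi ((homologyFunctor A n).map f))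
    (X : DerivedCategory A) (hX : Cl X) : P X := by
  have hCl' : ∀ X : {X // Cl X}, ∃ (X' : {X // Cl X}) (g : X.1 ⟶ X'.1), P.trW g ∧
      ∀ n : ℤ, (homologyFunctor A n).map g = 0 := by
    rintro ⟨X, hX⟩
    obtain ⟨Y, X', f, g, h, hT, hY, hX', hn⟩ := hCl X hX
    refine ⟨⟨X', hX'⟩, g, (P.trW_iff' _).2 ⟨_, _, _, hT, hY⟩, fun n => ?_⟩
    exact (HomologySequence.epi_homologyMap_mor₁_iff _ hT n).1 (hn n)
  choose N g hg hg0 using hCl'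
  let S : ℕ → {X // Cl X} := fun n => Nat.rec ⟨X, hX⟩ (fun _ Y => N Y) n
  let s : ∀ n, (S n).1 ⟶ (S (n+1)).1 := fun n => g (S n)
  let F : ℕ → DerivedCategory A := fun n => (S n).1
  let c : Cofan F := Cofan.mk (∐ F) (Sigma.ι F)
  let hc : IsColimit c := coproductIsCoproduct F
  let t : c.pt ⟶ c.pt := Cofan.IsColimit.desc hc (fun n => c.inj n - s n ≫ c.inj (n+1))
  have ht : ∀ n, c.inj n ≫ t = c.inj n - s n ≫ c.inj (n+1) := fun n => Cofan.IsColimit.fac hc _ n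
  have hi : IsIso t := by
    rw [DerivedCategory.isIso_iff]
    intro n
    have : (homologyFunctor A n).map t = 𝟙 _ := by
      rw [← sub_eq_zero]
      apply aux_Dhom_ext c hc
      intro i
      rw [Preadditive.comp_sub, ← Functor.map_comp, ht, Functor.map_sub, Functor.map_comp]
      simp [s, hg0]
    rw [this]
    infer_instance
  exact aux_tower P hP F s (fun n => hg _) c hc t ht hi
end PartThreeC

section PartFour
open DerivedCategory
variable {R : Type u} [CommRing R]

instance aux_exN : HasExactColimitsOfShape (Discrete ℕ) (ModuleCat.{u} R) :=
  inferInstance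

lemma aux_isTri [HasDerivedCategory.{w} (ModuleCat.{u} R)] {L : Set (DerivedCategory (ModuleCat.{u} R))}
    (hL : IsLocalizingSubcategory.{u} L) :
    ObjectProperty.IsTriangulated (C := DerivedCategory (ModuleCat.{u} R)) (fun X => X ∈ L) ∧
    ObjectProperty.IsClosedUnderIsomorphisms (C := DerivedCategory (ModuleCat.{u} R)) (fun X => X ∈ L) := by
  set P : ObjectProperty (DerivedCategory (ModuleCat.{u} R)) := fun X => X ∈ L with hPdef
  have h1 : P.IsClosedUnderIsomorphisms := ⟨fun e h => hL.mem_of_iso e h⟩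
  have h2 : P.IsStableUnderShift ℤ := ⟨fun n => ⟨fun X hX => hL.shift_mem X n hX⟩⟩
  have h3 : P.IsTriangulatedClosed₃ :=
    ObjectProperty.IsTriangulatedClosed₃.mk' (fun T hT h1 h2 => hL.cone_mem T hT h1 h2)
  have h4 : P.IsTriangulatedClosed₂ := ObjectProperty.IsTriangulatedClosed₂.of_isTriangulatedClosed₃
  have h5 : P.ContainsZero := by
    let f : PEmpty.{u+1} → DerivedCategory (ModuleCat.{u} R) := fun x => x.elim
    obtain ⟨Z, hz⟩ := HasZeroObject.zero (C := DerivedCategory (ModuleCat.{u} R))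
    refine ⟨⟨Z, hz, ?_⟩⟩
    refine hL.coproduct_mem f (fun x => x.elim) (Cofan.mk Z (fun x => x.elim)) ?_
    exact Cofan.IsColimit.mk _ (fun s => 0) (fun s j => j.elim) (fun s m h => hz.eq_of_src _ _)
  exact ⟨{}, h1⟩

lemma aux_hPN [HasDerivedCategory.{w} (ModuleCat.{u} R)]
    (P : ObjectProperty (DerivedCategory (ModuleCat.{u} R)))
    (hP : ∀ (ι : Type u) (X : ι → DerivedCategory (ModuleCat.{u} R)) (c : Cofan X), IsColimit c → (∀ i, P (X i)) → P c.pt) :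
    ∀ (X : ℕ → DerivedCategory (ModuleCat.{u} R)) (c : Cofan X), IsColimit c → (∀ i, P (X i)) → P c.pt := by
  intro X c hc h
  refine hP (ULift.{u} ℕ) (fun i => X i.down) (Cofan.mk c.pt (fun i => c.inj i.down)) ?_ (fun i => h _)
  refine Cofan.IsColimit.mk _ (fun s => Cofan.IsColimit.desc hc (fun n => s.inj ⟨n⟩)) ?_ ?_
  · intro s j
    exact Cofan.IsColimit.fac hc _ j.down
  · intro s m h
    apply Cofan.IsColimit.hom_ext hc
    intro n
    exact (h ⟨n⟩).trans (Cofan.IsColimit.fac hc (fun n => s.inj ⟨n⟩) n).symm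
end PartFour
section PartFourB
open DerivedCategory
variable {R : Type u} [CommRing R]

/-- the map from a single complex given by a cycle -/
noncomputable def auxPhi (K : CochainComplex (ModuleCat.{u} R) ℤ) (n : ℤ) (z : K.cycles n) :
    (HomologicalComplex.single (ModuleCat.{u} R) (ComplexShape.up ℤ) n).obj (ModuleCat.of R R) ⟶ K :=
  HomologicalComplex.mkHomFromSingle (ModuleCat.ofHom (LinearMap.toSpanSingleton R (K.cycles n) z) ≫ K.iCycles n)
    (fun k _ => by rw [Category.assoc, HomologicalComplex.iCycles_d, comp_zero])

lemma auxPhi_cycles (K : CochainComplex (ModuleCat.{u} R) ℤ) (n : ℤ) (z : K.cycles n) :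
    (HomologicalComplex.singleObjCyclesSelfIso (ComplexShape.up ℤ) n (ModuleCat.of R R)).inv ≫
      HomologicalComplex.cyclesMap (auxPhi K n z) n = ModuleCat.ofHom (LinearMap.toSpanSingleton R (K.cycles n) z) := by
  rw [← cancel_mono (K.iCycles n), Category.assoc, HomologicalComplex.cyclesMap_i,
    HomologicalComplex.singleObjCyclesSelfIso_inv_iCycles_assoc, auxPhi, HomologicalComplex.mkHomFromSingle_f]
  simp

lemma aux_epi [HasDerivedCategory.{w} (ModuleCat.{u} R)] (K : CochainComplex (ModuleCat.{u} R) ℤ)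
    (Y : DerivedCategory (ModuleCat.{u} R)) (f : Y ⟶ Q.obj K) (n : ℤ)
    (h : ∀ z : K.cycles n, ∃ i, i ≫ f = Q.map (auxPhi K n z)) :
    Epi ((homologyFunctor _ n).map f) := by
  rw [Preadditive.epi_iff_cancel_zero]
  intro T g hg
  let e := homologyFunctorFactors (ModuleCat.{u} R) n
  suffices K.homologyπ n ≫ e.inv.app K ≫ g = 0 by
    have h1 : e.inv.app K ≫ g = 0 := (cancel_epi (K.homologyπ n)).1 (this.trans comp_zero.symm)
    exact (cancel_epi (e.inv.app K)).1 (h1.trans comp_zero.symm)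
  ext z
  obtain ⟨i, hi⟩ := h z
  have h1 : (homologyFunctor _ n).map (Q.map (auxPhi K n z)) ≫ g = 0 := by
    rw [← hi, Functor.map_comp, Category.assoc, hg, comp_zero]
  have h2 : HomologicalComplex.homologyMap (auxPhi K n z) n ≫ e.inv.app K ≫ g = 0 := by
    have := e.inv.naturality (auxPhi K n z)
    refine (Category.assoc _ _ _).symm.trans ?_
    refine (congrArg (· ≫ g) this).trans ?_
    refine (Category.assoc _ _ _).trans ?_
    refine (congrArg (e.inv.app _ ≫ ·) h1).trans comp_zero
  have h3 : ModuleCat.ofHom (LinearMap.toSpanSingleton R (K.cycles n) z) ≫ K.homologyπ n ≫ e.inv.app K ≫ g = 0 := by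
    rw [← auxPhi_cycles, Category.assoc, ← HomologicalComplex.homologyπ_naturality_assoc, h2, comp_zero, comp_zero]
  have h4 := congrArg (fun q => q.hom (1 : R)) h3
  simpa using h4

lemma aux_shift_single [HasDerivedCategory.{w} (ModuleCat.{u} R)]
    (P : ObjectProperty (DerivedCategory (ModuleCat.{u} R))) [P.IsTriangulated] [P.IsClosedUnderIsomorphisms]
    (M : ModuleCat.{u} R) (a b : ℤ) (h : P ((singleFunctor _ a).obj M)) : P ((singleFunctor _ b).obj M) := by
  have e := ((singleFunctors (ModuleCat.{u} R)).shiftIso (a - b) b a (by omega)).app M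
  exact P.prop_of_iso e (P.le_shift (a - b) _ h)

lemma aux_gen [HasDerivedCategory.{w} (ModuleCat.{u} R)]
    (P : ObjectProperty (DerivedCategory (ModuleCat.{u} R))) [P.IsTriangulated] [P.IsClosedUnderIsomorphisms]
    (hP : ∀ (ι : Type u) (X : ι → DerivedCategory (ModuleCat.{u} R)) (c : Cofan X), IsColimit c → (∀ i, P (X i)) → P c.pt)
    (hR : P ((singleFunctor _ 0).obj (ModuleCat.of R R))) (X : DerivedCategory (ModuleCat.{u} R)) : P X := by
  refine aux_class P (aux_hPN P hP) (fun _ => True) ?_ X trivial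
  intro X _
  obtain ⟨K, ⟨e⟩⟩ : ∃ K : CochainComplex (ModuleCat.{u} R) ℤ, Nonempty (Q.obj K ≅ X) :=
    ⟨Q.objPreimage X, ⟨Q.objObjPreimageIso X⟩⟩
  let ι : Type u := Σ n : ULift.{u} ℤ, K.cycles n.down
  let F : ι → DerivedCategory (ModuleCat.{u} R) := fun i => (singleFunctor _ i.1.down).obj (ModuleCat.of R R)
  let φ : ∀ i, F i ⟶ Q.obj K := fun i => Q.map (auxPhi K i.1.down i.2)
  let f : ∐ F ⟶ Q.obj K := Sigma.desc φ
  obtain ⟨Z, g, h, hT⟩ := distinguished_cocone_triangle (f ≫ e.hom)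
  refine ⟨∐ F, Z, f ≫ e.hom, g, h, hT, ?_, trivial, ?_⟩
  · exact hP ι F _ (coproductIsCoproduct F) (fun i => aux_shift_single P _ 0 _ hR)
  · intro n
    have : Epi ((homologyFunctor _ n).map f) := by
      apply aux_epi
      intro z
      exact ⟨Sigma.ι F ⟨⟨n⟩, z⟩, Sigma.ι_desc _ _⟩
    rw [Functor.map_comp]
    infer_instance
end PartFourB
section PartFourC
open DerivedCategory DirectSum
variable {R : Type u} [CommRing R] [HasDerivedCategory.{w} (ModuleCat.{u} R)]

/-- membership of a module, placed in degree 0 -/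
def auxM (P : ObjectProperty (DerivedCategory (ModuleCat.{u} R))) (M : Type u) [AddCommGroup M] [Module R M] : Prop :=
  P ((singleFunctor (ModuleCat.{u} R) 0).obj (ModuleCat.of R M))

variable (P : ObjectProperty (DerivedCategory (ModuleCat.{u} R))) [P.IsTriangulated] [P.IsClosedUnderIsomorphisms]
variable {M N : Type u} [AddCommGroup M] [Module R M] [AddCommGroup N] [Module R N]

lemma auxM_equiv (e : M ≃ₗ[R] N) (h : auxM P M) : auxM P N :=
  P.prop_of_iso ((singleFunctor (ModuleCat.{u} R) 0).mapIso e.toModuleIso) h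

lemma auxM_ker (f : M →ₗ[R] N) (hf : Function.Surjective f) (hM : auxM P M) (hN : auxM P N) :
    auxM P (LinearMap.ker f) :=
  P.ext_of_isTriangulatedClosed₁ _ (LinearMap.shortExact_shortComplexKer hf).singleTriangle_distinguished hM hN

lemma auxM_ext (f : M →ₗ[R] N) (hf : Function.Surjective f) (hM : auxM P (LinearMap.ker f)) (hN : auxM P N) :
    auxM P M :=
  P.ext_of_isTriangulatedClosed₂ _ (LinearMap.shortExact_shortComplexKer hf).singleTriangle_distinguished hM hN

lemma auxM_sub [Subsingleton M] : auxM P M := by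
  have hz : IsZero (ModuleCat.of R M) := ModuleCat.isZero_of_subsingleton _
  exact P.prop_of_isZero ((singleFunctor (ModuleCat.{u} R) 0).map_isZero hz)

lemma auxM_sum (hP : ∀ (ι : Type u) (X : ι → DerivedCategory (ModuleCat.{u} R)) (c : Cofan X), IsColimit c → (∀ i, P (X i)) → P c.pt)
    {ι : Type u} [DecidableEq ι] (F : ι → Type u) [∀ i, AddCommGroup (F i)] [∀ i, Module R (F i)]
    (h : ∀ i, auxM P (F i)) : auxM P (⨁ i, F i) := by
  let Z : ι → ModuleCat.{u} R := fun i => ModuleCat.of R (F i)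
  obtain ⟨hc⟩ := aux_single (ModuleCat.coproductCocone Z) (ModuleCat.coproductCoconeIsColimit Z) 0
  exact hP ι _ _ hc h
end PartFourC

section PartFourD
open DirectSum
variable {R : Type u} [CommRing R] {M : Type u} [AddCommGroup M] [Module R M]

open Classical in
/-- truncated family -/
noncomputable def auxN {J : Type u} [Preorder J] (N : J → Submodule R M) (a b : J) : Submodule R M :=
  if b ≤ a then N b else ⊥

lemma auxN_le {J : Type u} [Preorder J] (N : J → Submodule R M) (a b : J) : auxN N a b ≤ N b := by
  unfold auxN; split_ifs <;> simp

lemma auxN_le' {J : Type u} [Preorder J] (N : J → Submodule R M) (hN : Monotone N) (a b : J) : auxN N a b ≤ N a := by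
  unfold auxN; split_ifs with h
  · exact hN h
  · exact bot_le

lemma auxN_mono {J : Type u} [Preorder J] (N : J → Submodule R M) {a a' : J} (h : a ≤ a') (b : J) :
    auxN N a b ≤ auxN N a' b := by
  unfold auxN
  split_ifs with h1 h2
  · exact le_rfl
  · exact absurd (h1.trans h) h2
  · exact bot_le
  · exact le_rfl

variable {J : Type u} [Preorder J] [DecidableEq J] (N : J → Submodule R M)

/-- the sum map -/
noncomputable def auxSum : (⨁ j, N j) →ₗ[R] M := DirectSum.toModule R J M (fun j => (N j).subtype)

/-- the truncated sum map -/
noncomputable def auxPsi (hN : Monotone N) (a : J) : (⨁ j, auxN N a j) →ₗ[R] N a :=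
  DirectSum.toModule R J (N a) (fun j => Submodule.inclusion (auxN_le' N hN a j))

/-- inclusion of the truncated sum -/
noncomputable def auxInc (a : J) : (⨁ j, auxN N a j) →ₗ[R] (⨁ j, N j) :=
  DFinsupp.mapRange.linearMap (fun j => Submodule.inclusion (auxN_le N a j))

lemma auxInc_apply (a : J) (x : ⨁ j, auxN N a j) (b : J) : ((auxInc N a x) b : M) = (x b : M) := rfl

lemma auxInc_sum (hN : Monotone N) (a : J) (x : ⨁ j, auxN N a j) :
    auxSum N (auxInc N a x) = (auxPsi N hN a x : M) := by
  have : (auxSum N).comp (auxInc N a) = (N a).subtype.comp (auxPsi N hN a) := by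
    refine DirectSum.linearMap_ext _ fun i => ?_
    ext x
    have h1 : auxInc N a (DirectSum.lof R J (fun j => auxN N a j) i x) =
        DirectSum.lof R J (fun j => N j) i (Submodule.inclusion (auxN_le N a i) x) :=
      DFinsupp.mapRange_single (hf := fun _ => rfl) ..
    simp only [LinearMap.comp_apply, h1]
    simp [auxSum, auxPsi]
  exact congrArg (fun f => f x) this

lemma auxPsi_surj (hN : Monotone N) (a : J) : Function.Surjective (auxPsi N hN a) := by
  intro x
  refine ⟨DirectSum.lof R J (fun j => auxN N a j) a ⟨x.1, by simp [auxN]⟩, ?_⟩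
  ext
  simp [auxPsi]

/-- the restricted map on kernels -/
noncomputable def auxK (hN : Monotone N) (a : J) : LinearMap.ker (auxPsi N hN a) →ₗ[R] LinearMap.ker (auxSum N) :=
  (auxInc N a).restrict (fun x hx => by
    rw [LinearMap.mem_ker] at hx ⊢
    rw [auxInc_sum N hN, hx]; rfl)

lemma auxK_inj (hN : Monotone N) (a : J) : Function.Injective (auxK N hN a) := by
  intro x y h
  apply Subtype.ext
  apply DFinsupp.ext
  intro b
  apply Subtype.ext
  have h' : auxInc N a x.1 = auxInc N a y.1 := congrArg Subtype.val h
  exact congrArg (fun z : ⨁ j, N j => (z b : M)) h'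

lemma auxK_range (hN : Monotone N) (a : J) (x : LinearMap.ker (auxSum N)) :
    x ∈ LinearMap.range (auxK N hN a) ↔ ∀ b, (x.1 b : M) ∈ auxN N a b := by
  classical
  constructor
  · rintro ⟨y, rfl⟩ b
    exact (y.1 b).2
  · intro h
    let y : ⨁ j, auxN N a j := DFinsupp.mapRange (fun b (m : N b) => if h : (m : M) ∈ auxN N a b then ⟨m, h⟩ else 0)
      (fun b => by simp) x.1
    have hy : auxInc N a y = x.1 := by
      apply DFinsupp.ext
      intro b
      apply Subtype.ext
      refine (auxInc_apply N a y b).trans ?_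
      have : y b = ⟨x.1 b, h b⟩ := (DFinsupp.mapRange_apply ..).trans (dif_pos (h b))
      rw [this]
    refine ⟨⟨y, ?_⟩, Subtype.ext hy⟩
    rw [LinearMap.mem_ker]
    apply Subtype.ext
    rw [← auxInc_sum, hy]
    exact x.2

lemma auxK_mono (hN : Monotone N) : Monotone (fun a => LinearMap.range (auxK N hN a)) := by
  intro a a' h x hx
  simp only [auxK_range] at hx ⊢
  exact fun b => auxN_mono N h b (hx b)

lemma auxK_cover [IsDirectedOrder J] [Nonempty J] (hN : Monotone N) (x : LinearMap.ker (auxSum N)) :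
    ∃ a, x ∈ LinearMap.range (auxK N hN a) := by
  classical
  obtain ⟨a, ha⟩ := Finset.exists_le (DFinsupp.support x.1)
  refine ⟨a, (auxK_range N hN a x).2 fun b => ?_⟩
  by_cases hb : x.1 b = 0
  · rw [hb]; exact Submodule.zero_mem _
  · rw [auxN, if_pos (ha b (DFinsupp.mem_support_iff.2 hb))]; exact (x.1 b).2

lemma auxSum_surj (hc : ∀ m, ∃ j, m ∈ N j) : Function.Surjective (auxSum N) := by
  intro m
  obtain ⟨j, hj⟩ := hc m
  exact ⟨DirectSum.lof R J (fun j => N j) j ⟨m, hj⟩, by simp [auxSum]⟩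
end PartFourD
section PartFourE
open DerivedCategory DirectSum
variable {R : Type u} [CommRing R] [HasDerivedCategory.{w} (ModuleCat.{u} R)]

lemma aux_epi_single {A B : ModuleCat.{u} R} (f : A ⟶ B) [Epi f] (n k : ℤ) :
    Epi ((homologyFunctor _ k).map ((singleFunctor (ModuleCat.{u} R) n).map f)) := by
  let s := HomologicalComplex.single (ModuleCat.{u} R) (ComplexShape.up ℤ) n
  have h : Epi (HomologicalComplex.homologyMap (s.map f) k) := by
    by_cases hk : k = n
    · subst hk
      have h1 := HomologicalComplex.singleObjHomologySelfIso_hom_naturality (ComplexShape.up ℤ) k f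
      have h2 : HomologicalComplex.homologyMap (s.map f) k =
        ((HomologicalComplex.singleObjHomologySelfIso (ComplexShape.up ℤ) k A).hom ≫ f) ≫
          (HomologicalComplex.singleObjHomologySelfIso (ComplexShape.up ℤ) k B).inv := by
        rw [Iso.eq_comp_inv]; exact h1
      rw [h2]
      infer_instance
    · exact ⟨fun _ _ _ => (HomologicalComplex.isZero_single_obj_homology (ComplexShape.up ℤ) n B k hk).eq_of_src _ _⟩
  let e := homologyFunctorFactors (ModuleCat.{u} R) k
  have h3 := (NatIso.naturality_1 e (s.map f))
  have h4 : (homologyFunctor _ k).map ((singleFunctor (ModuleCat.{u} R) n).map f) =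
      e.hom.app _ ≫ HomologicalComplex.homologyMap (s.map f) k ≫ e.inv.app _ :=
    (NatIso.naturality_2 e (s.map f)).symm
  rw [h4]
  have i1 : Epi (e.hom.app (s.obj A)) := inferInstance
  have i2 : Epi (e.inv.app (s.obj B)) := inferInstance
  have i3 := @epi_comp _ _ _ _ _ _ h _ i2
  exact @epi_comp _ _ _ _ _ _ i1 _ i3

lemma aux_tri {A B C : DerivedCategory (ModuleCat.{u} R)} {f : A ⟶ B} {g : B ⟶ C} {h : C ⟶ A⟦(1 : ℤ)⟧}
    (hT : Triangle.mk f g h ∈ distTriang _) {X : DerivedCategory (ModuleCat.{u} R)} (e : X ≅ B) :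
    Triangle.mk (f ≫ e.inv) (e.hom ≫ g) h ∈ distTriang _ := by
  refine isomorphic_distinguished _ hT _ (Triangle.isoMk _ _ (Iso.refl _) e (Iso.refl _) ?_ ?_ ?_)
  · change (f ≫ e.inv) ≫ e.hom = 𝟙 _ ≫ f
    simp
  · change (e.hom ≫ g) ≫ 𝟙 _ = e.hom ≫ g
    simp
  · change h ≫ (shiftFunctor _ (1 : ℤ)).map (𝟙 _) = 𝟙 _ ≫ h
    simp

variable (P : ObjectProperty (DerivedCategory (ModuleCat.{u} R))) [P.IsTriangulated] [P.IsClosedUnderIsomorphisms]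

lemma auxM_range' {M₁ M₂ : Type u} [AddCommGroup M₁] [Module R M₁] [AddCommGroup M₂] [Module R M₂]
    (f : M₁ →ₗ[R] M₂) (hf : Function.Injective f) (h : auxM P M₁) : auxM P (LinearMap.range f) :=
  auxM_equiv P (LinearEquiv.ofInjective f hf) h

lemma auxM_kerK (hP : ∀ (ι : Type u) (X : ι → DerivedCategory (ModuleCat.{u} R)) (c : Cofan X), IsColimit c → (∀ i, P (X i)) → P c.pt)
    (J : Type u) [Preorder J] [DecidableEq J] (M : Type u) [AddCommGroup M] [Module R M]
    (N : J → Submodule R M) (hN : Monotone N) (h : ∀ j, auxM P (N j)) (a : J) :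
    auxM P (LinearMap.ker (auxPsi N hN a)) := by
  refine auxM_ker P _ (auxPsi_surj N hN a) (auxM_sum P hP _ fun b => ?_) (h a)
  by_cases hb : b ≤ a
  · have : auxN N a b = N b := if_pos hb
    rw [this]; exact h b
  · have : auxN N a b = ⊥ := if_neg hb
    rw [this]; exact auxM_sub P

lemma auxM_step' {D M J : Type u} [Preorder J] [AddCommGroup D] [Module R D] [AddCommGroup M] [Module R M]
    (f : D →ₗ[R] M) (hf : Function.Surjective f) (hD : auxM P D)
    (Z : J → Type u) [∀ j, AddCommGroup (Z j)] [∀ j, Module R (Z j)] (k : ∀ j, Z j →ₗ[R] LinearMap.ker f)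
    (hk : ∀ j, Function.Injective (k j)) (hZ : ∀ j, auxM P (Z j)) (hm : Monotone (fun j => LinearMap.range (k j)))
    (hc : ∀ x, ∃ j, x ∈ LinearMap.range (k j)) : ∃ (D K : Type u) (_ : AddCommGroup D) (_ : Module R D) (_ : AddCommGroup K) (_ : Module R K)
      (f : D →ₗ[R] M) (e : K ≃ₗ[R] LinearMap.ker f),
      Function.Surjective f ∧ auxM P D ∧ ∃ N' : J → Submodule R K, Monotone N' ∧ (∀ x, ∃ j, x ∈ N' j) ∧
        ∀ j, auxM P (N' j) :=
  ⟨D, LinearMap.ker f, inferInstance, inferInstance, inferInstance, inferInstance, f, LinearEquiv.refl R _, hf, hD,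
    fun j => LinearMap.range (k j), hm, hc, fun j => auxM_range' P (k j) (hk j) (hZ j)⟩

lemma auxM_step (hP : ∀ (ι : Type u) (X : ι → DerivedCategory (ModuleCat.{u} R)) (c : Cofan X), IsColimit c → (∀ i, P (X i)) → P c.pt)
    (J : Type u) [Preorder J] [IsDirectedOrder J] [Nonempty J] (M : Type u) [AddCommGroup M] [Module R M]
    (N : J → Submodule R M) (hN : Monotone N) (hc : ∀ m, ∃ j, m ∈ N j) (h : ∀ j, auxM P (N j)) : ∃ (D K : Type u) (_ : AddCommGroup D) (_ : Module R D) (_ : AddCommGroup K) (_ : Module R K)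
      (f : D →ₗ[R] M) (e : K ≃ₗ[R] LinearMap.ker f),
      Function.Surjective f ∧ auxM P D ∧ ∃ N' : J → Submodule R K, Monotone N' ∧ (∀ x, ∃ j, x ∈ N' j) ∧
        ∀ j, auxM P (N' j) := by
  classical
  exact auxM_step' P (auxSum N) (auxSum_surj N hc) (auxM_sum P hP (fun j => N j) h)
    (fun a => LinearMap.ker (auxPsi N hN a)) (fun a => auxK N hN a) (fun a => auxK_inj N hN a)
    (fun a => auxM_kerK P hP J M N hN h a) (auxK_mono N hN) (auxK_cover N hN)

lemma auxM_dir (hP : ∀ (ι : Type u) (X : ι → DerivedCategory (ModuleCat.{u} R)) (c : Cofan X), IsColimit c → (∀ i, P (X i)) → P c.pt)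
    (J : Type u) [Preorder J] [IsDirectedOrder J] [Nonempty J] (M : Type u) [AddCommGroup M] [Module R M]
    (N : J → Submodule R M) (hN : Monotone N) (hc : ∀ m, ∃ j, m ∈ N j) (h : ∀ j, auxM P (N j)) : auxM P M := by
  classical
  let Cl : ObjectProperty (DerivedCategory (ModuleCat.{u} R)) := fun X =>
    ∃ (M : ModuleCat.{u} R) (N : J → Submodule R M), Monotone N ∧ (∀ m, ∃ j, m ∈ N j) ∧ (∀ j, auxM P (N j)) ∧
      ∃ n : ℤ, Nonempty (X ≅ (singleFunctor _ n).obj M)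
  refine aux_class P (aux_hPN P hP) Cl ?_ _ ⟨ModuleCat.of R M, N, hN, hc, h, 0, ⟨Iso.refl _⟩⟩
  clear hc h hN N
  rintro X ⟨M, N, hN, hc, h, n, ⟨e⟩⟩
  obtain ⟨D, K, _, _, _, _, f, e', hf, hD, N', hN', hc', h'⟩ := auxM_step P hP J M N hN hc h
  have hS := LinearMap.shortExact_shortComplexKer hf
  have hS' := hS.map_of_exact (HomologicalComplex.single (ModuleCat.{u} R) (ComplexShape.up ℤ) n)
  have hT := rot_of_distTriang _ (triangleOfSES_distinguished hS')
  have hT' := aux_tri hT e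
  refine ⟨_, _, _, _, _, hT', ?_, ?_, ?_⟩
  · exact aux_shift_single P _ 0 n hD
  · refine ⟨ModuleCat.of R K, N', hN', hc', h', n - 1, ?_⟩
    have i1 := ((singleFunctors (ModuleCat.{u} R)).shiftIso 1 (n - 1) n (by omega)).app
      (ModuleCat.of R (LinearMap.ker f))
    have i2 := (singleFunctor (ModuleCat.{u} R) (n - 1)).mapIso e'.symm.toModuleIso
    exact ⟨i1 ≪≫ i2⟩
  · intro k
    rw [Functor.map_comp]
    have : Epi (ModuleCat.ofHom f) := (ModuleCat.epi_iff_surjective _).2 hf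
    have h1 := aux_epi_single (ModuleCat.ofHom f) n k
    have h2 : Epi ((homologyFunctor (ModuleCat.{u} R) k).map e.inv) := inferInstance
    exact @epi_comp _ _ _ _ _ _ h1 _ h2
end PartFourE

section PartFourF
variable {R : Type u} [CommRing R]

lemma aux_loc_surj (hreg : IsAbsolutelyFlat R) (m : Ideal R) [m.IsPrime] :
    Function.Surjective (Algebra.linearMap R (Localization.AtPrime m)) := by
  intro y
  obtain ⟨⟨a, s⟩, rfl⟩ := IsLocalization.mk'_surjective m.primeCompl y
  obtain ⟨x, hx⟩ := hreg s
  refine ⟨a * x, ?_⟩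
  rw [Algebra.linearMap_apply]
  change _ = IsLocalization.mk' (Localization.AtPrime m) a s
  rw [IsLocalization.eq_mk'_iff_mul_eq, ← map_mul]
  rw [IsLocalization.eq_iff_exists m.primeCompl]
  refine ⟨s, ?_⟩
  linear_combination (-a) * hx

lemma aux_loc_ker (hreg : IsAbsolutelyFlat R) (m : Ideal R) [m.IsPrime] :
    LinearMap.ker (Algebra.linearMap R (Localization.AtPrime m)) = m := by
  ext r
  rw [LinearMap.mem_ker, Algebra.linearMap_apply]
  constructor
  · intro h
    by_contra hr
    have h1 : IsUnit (algebraMap R (Localization.AtPrime m) r) :=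
      IsLocalization.map_units (M := m.primeCompl) _ ⟨r, hr⟩
    rw [h] at h1
    exact not_isUnit_zero h1
  · intro hr
    obtain ⟨x, hx⟩ := hreg r
    rw [← map_zero (algebraMap R (Localization.AtPrime m)), IsLocalization.eq_iff_exists m.primeCompl]
    refine ⟨⟨1 - r * x, fun h => ?_⟩, ?_⟩
    · have : (1 : R) ∈ m := by
        have := m.add_mem h (m.mul_mem_right x hr)
        simpa using this
      exact (Ideal.ne_top_iff_one m).1 (Ideal.IsPrime.ne_top inferInstance) this
    · change (1 - r * x) * r = (1 - r * x) * 0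
      linear_combination hx

lemma auxM_R [HasDerivedCategory.{w} (ModuleCat.{u} R)] (hreg : IsAbsolutelyFlat R) (hsa : IsSemiArtinianRing R)
    (P : ObjectProperty (DerivedCategory (ModuleCat.{u} R))) [P.IsTriangulated] [P.IsClosedUnderIsomorphisms]
    (hP : ∀ (ι : Type u) (X : ι → DerivedCategory (ModuleCat.{u} R)) (c : Cofan X), IsColimit c → (∀ i, P (X i)) → P c.pt)
    (hk : ∀ p : PrimeSpectrum R, P (residueFieldObj R p)) : auxM P R := by
  have hsimple : ∀ (S : Type u) [AddCommGroup S] [Module R S] [IsSimpleModule R S], auxM P S := by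
    intro S _ _ _
    obtain ⟨m, hm, ⟨e⟩⟩ := isSimpleModule_iff_quot_maximal.1 (inferInstance : IsSimpleModule R S)
    have hmp : m.IsPrime := hm.isPrime
    have h1 : auxM P (Localization.AtPrime m) := hk ⟨m, hmp⟩
    refine auxM_equiv P e.symm ?_
    refine auxM_equiv P ?_ h1
    have e1 : (R ⧸ m) ≃ₗ[R] (R ⧸ LinearMap.ker (Algebra.linearMap R (Localization.AtPrime m))) :=
      Submodule.quotEquivOfEq _ _ (aux_loc_ker hreg m).symm
    have e2 := LinearMap.quotKerEquivOfSurjective _ (aux_loc_surj hreg m)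
    exact e2.symm.trans e1.symm
  obtain ⟨I, hI⟩ : ∃ I : Ideal R, Maximal (fun I : Ideal R => auxM P I) I := by
    refine zorn_le₀ {I : Ideal R | auxM P I} ?_ 
    intro c hc hch
    rcases c.eq_empty_or_nonempty with rfl | hne
    · exact ⟨⊥, auxM_sub P, by simp⟩
    refine ⟨sSup c, ?_, fun z hz => le_sSup hz⟩
    have : Nonempty c := hne.to_subtype
    have : IsDirectedOrder c := ⟨fun a b => by
      rcases hch.total a.2 b.2 with h | h
      · exact ⟨b, h, le_rfl⟩
      · exact ⟨a, le_rfl, h⟩⟩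
    refine auxM_dir P hP c (sSup c : Ideal R) (fun i => Submodule.comap (sSup c : Ideal R).subtype i.1) ?_ ?_ ?_
    · intro a b h
      exact Submodule.comap_mono h
    · rintro ⟨m, hm⟩
      obtain ⟨i, hi, hmi⟩ := (Submodule.mem_sSup_of_directed hne hch.directedOn).1 hm
      exact ⟨⟨i, hi⟩, hmi⟩
    · rintro ⟨i, hi⟩
      exact auxM_equiv P (Submodule.comapSubtypeEquivOfLe (le_sSup hi)).symm (hc hi)
  by_cases hT : I = ⊤
  · subst hT
    exact auxM_equiv P Submodule.topEquiv hI.prop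
  exfalso
  obtain ⟨S, hS⟩ := hsa I hT
  let K : Ideal R := Submodule.comap I.mkQ S
  have hIK : I ≤ K := Submodule.le_comap_mkQ I S
  let f : K →ₗ[R] S := I.mkQ.restrict (fun x hx => hx)
  have hf : Function.Surjective f := by
    rintro ⟨y, hy⟩
    obtain ⟨x, rfl⟩ := I.mkQ_surjective y
    exact ⟨⟨x, hy⟩, rfl⟩
  have hker : LinearMap.ker f = Submodule.comap K.subtype I := by
    ext x
    rw [LinearMap.mem_ker, Submodule.mem_comap, ← Submodule.Quotient.mk_eq_zero I]
    exact Subtype.ext_iff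
  have hK : auxM P K := by
    refine auxM_ext P f hf ?_ (hsimple S)
    rw [hker]
    exact auxM_equiv P (Submodule.comapSubtypeEquivOfLe hIK).symm hI.prop
  have hKI : K ≤ I := hI.le_of_ge hK hIK
  have hnt := IsSimpleModule.nontrivial R S
  obtain ⟨y, hy⟩ := exists_ne (0 : S)
  obtain ⟨x, rfl⟩ := hf y
  apply hy
  have : x ∈ LinearMap.ker f := by rw [hker]; exact hKI x.2
  exact this
end PartFourF

theorem statement16 (R : Type u) [CommRing R] [HasDerivedCategory.{w} (ModuleCat.{u} R)]
    (hreg : IsAbsolutelyFlat R) (hsa : IsSemiArtinianRing R) :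
    localizingClosure.{u} {A : DerivedCategory (ModuleCat.{u} R) |
      ∃ P : PrimeSpectrum R, A = residueFieldObj R P} = Set.univ := by
  rw [localizingClosure, Set.eq_univ_iff_forall]
  rintro X L ⟨hL, hS⟩
  obtain ⟨h1, h2⟩ := aux_isTri hL
  have hP : ∀ (ι : Type u) (X : ι → DerivedCategory (ModuleCat.{u} R)) (c : Cofan X), IsColimit c →
      (∀ i, X i ∈ L) → c.pt ∈ L := fun ι X c hc h => hL.coproduct_mem X h c hc
  have hR := auxM_R hreg hsa (fun X => X ∈ L) hP (fun p => hS ⟨p, rfl⟩)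
  exact aux_gen (fun X => X ∈ L) hP hR X
end

section
/- Let R be a semi-artinian absolutely flat (von Neumann regular) commutative ring. Then the local-to-global principle holds for D(R): for every object A of D(R), A lies in the smallest localizing subcategory of D(R) containing the objects R_P ⊗_R A for all prime ideals P of R (here R_P is flat, so R_P ⊗_R A computes the derived tensor product). -/
open CategoryTheory CategoryTheory.Limits CategoryTheory.Pretriangulated CategoryTheory.MonoidalCategory

universe w v u

/-- Unbundled universal property of coproducts. -/
def IsCop {C : Type*} [Category* C] {ι : Type*} (X : ι → C) (S : C) (i : ∀ a, X a ⟶ S) : Prop :=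
  (∀ (Y : C) (f : ∀ a, X a ⟶ Y), ∃ g : S ⟶ Y, ∀ a, i a ≫ g = f a) ∧
  (∀ (Y : C) (g g' : S ⟶ Y), (∀ a, i a ≫ g = i a ≫ g') → g = g')

namespace IsCop

theorem of_isColimit {C : Type*} [Category* C] {ι : Type*} {X : ι → C} {c : Cofan X}
    (hc : IsColimit c) : IsCop X c.pt c.inj :=
  ⟨fun _ f => ⟨Cofan.IsColimit.desc hc f, fun a => by simp⟩,
    fun _ g g' h => Cofan.IsColimit.hom_ext hc g g' h⟩

theorem isColimit {C : Type*} [Category* C] {ι : Type*} {X : ι → C} {S : C}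
    {i : ∀ a, X a ⟶ S} (h : IsCop X S i) : Nonempty (IsColimit (Cofan.mk S i)) :=
  ⟨Cofan.IsColimit.mk _ (fun s => (h.1 _ s.inj).choose)
    (fun s j => (h.1 _ s.inj).choose_spec j)
    (fun s m hm => h.2 _ _ _ (fun a => by
      rw [(h.1 _ s.inj).choose_spec a]; exact hm a))⟩

theorem map_of_isEquivalence {C D : Type*} [Category* C] [Category* D] {ι : Type*} {X : ι → C}
    {S : C} {i : ∀ a, X a ⟶ S} (h : IsCop X S i) (F : C ⥤ D) [F.IsEquivalence] :
    IsCop (fun a => F.obj (X a)) (F.obj S) (fun a => F.map (i a)) := by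
  constructor
  · intro Y f
    obtain ⟨g, hg⟩ := h.1 (F.objPreimage Y) (fun a => F.preimage (f a ≫ (F.objObjPreimageIso Y).inv))
    exact ⟨F.map g ≫ (F.objObjPreimageIso Y).hom, fun a => by
      rw [← Category.assoc, ← F.map_comp, hg]; simp⟩
  · intro Y g g' hh
    have := h.2 (F.objPreimage Y) (F.preimage (g ≫ (F.objObjPreimageIso Y).inv))
      (F.preimage (g' ≫ (F.objObjPreimageIso Y).inv)) (fun a => F.map_injective (by
        simp only [F.map_comp, F.map_preimage]; rw [← Category.assoc, hh, Category.assoc]))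
    have := congrArg F.map this
    simpa using this

theorem of_iso {C : Type*} [Category* C] {ι : Type*} {X X' : ι → C} {S S' : C}
    {i : ∀ a, X a ⟶ S} (h : IsCop X S i) (e : ∀ a, X' a ≅ X a) (e' : S ≅ S') :
    IsCop X' S' (fun a => (e a).hom ≫ i a ≫ e'.hom) := by
  constructor
  · intro Y f
    obtain ⟨g, hg⟩ := h.1 Y (fun a => (e a).inv ≫ f a)
    exact ⟨e'.inv ≫ g, fun a => by simp [hg]⟩
  · intro Y g g' hh
    rw [← cancel_epi e'.hom]
    refine h.2 _ _ _ fun a => ?_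
    rw [← cancel_epi (e a).hom]
    simpa using hh a

theorem reindex {C : Type*} [Category* C] {ι κ : Type*} (e : κ ≃ ι) {X : ι → C} {S : C}
    {i : ∀ a, X a ⟶ S} (h : IsCop X S i) : IsCop (fun k => X (e k)) S (fun k => i (e k)) := by
  constructor
  · intro Y f
    have : ∃ f' : ∀ a, X a ⟶ Y, ∀ k, f' (e k) = f k := by
      refine ⟨fun a => eqToHom (by simp) ≫ f (e.symm a), fun k => ?_⟩
      have : ∀ k' (hk : k' = k), eqToHom (by rw [hk]) ≫ f k' = f k := by
        rintro _ rfl; simp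
      exact this _ (by simp)
    obtain ⟨f', hf'⟩ := this
    obtain ⟨g, hg⟩ := h.1 Y f'
    exact ⟨g, fun k => by rw [hg, hf']⟩
  · intro Y g g' hh
    refine h.2 _ _ _ fun a => ?_
    obtain ⟨k, rfl⟩ := e.surjective a
    exact hh k

section Tri
variable {C : Type*} [Category* C] [HasZeroObject C]
    [Preadditive C] [HasShift C ℤ] [∀ n : ℤ, (shiftFunctor C n).Additive] [Pretriangulated C]

theorem triangle {ι : Type*} (T : ι → Triangle C) (hT : ∀ a, T a ∈ distTriang C)
    (T' : Triangle C) (hT' : T' ∈ distTriang C) (φ : ∀ a, T a ⟶ T')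
    (h₁ : IsCop (fun a => (T a).obj₁) T'.obj₁ (fun a => (φ a).hom₁))
    (h₂ : IsCop (fun a => (T a).obj₂) T'.obj₂ (fun a => (φ a).hom₂)) :
    IsCop (fun a => (T a).obj₃) T'.obj₃ (fun a => (φ a).hom₃) := by
  have h₁' := h₁.map_of_isEquivalence (shiftFunctor C (1 : ℤ))
  have h₂' := h₂.map_of_isEquivalence (shiftFunctor C (1 : ℤ))
  constructor
  · intro Y f
    obtain ⟨y, hy⟩ := h₂.1 Y (fun a => (T a).mor₂ ≫ f a)
    obtain ⟨k, hk⟩ := T'.yoneda_exact₂ hT' y (h₁.2 _ _ _ fun a => by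
      rw [← Category.assoc, ← (φ a).comm₁, Category.assoc, hy, ← Category.assoc,
        comp_distTriang_mor_zero₁₂ _ (hT a)]; simp)
    have : ∀ a, ∃ l, (φ a).hom₃ ≫ k - f a = (T a).mor₃ ≫ l := fun a => by
      refine (T a).yoneda_exact₃ (hT a) _ ?_
      rw [Preadditive.comp_sub, ← Category.assoc, (φ a).comm₂, Category.assoc, ← hk, hy, sub_self]
    choose l hl using this
    obtain ⟨l', hl'⟩ := h₁'.1 Y l
    refine ⟨k - T'.mor₃ ≫ l', fun a => ?_⟩
    rw [Preadditive.comp_sub, ← Category.assoc _ T'.mor₃, ← (φ a).comm₃, Category.assoc, hl', ← hl]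
    abel
  · suffices ∀ (Y : C) (g : T'.obj₃ ⟶ Y), (∀ a, (φ a).hom₃ ≫ g = 0) → g = 0 by
      intro Y g g' hh
      rw [← sub_eq_zero]
      exact this _ _ fun a => by rw [Preadditive.comp_sub, hh, sub_self]
    intro Y g hg
    obtain ⟨l, rfl⟩ := T'.yoneda_exact₃ hT' g (h₂.2 _ _ _ fun a => by
      rw [← Category.assoc, ← (φ a).comm₂, Category.assoc, hg]; simp)
    have : ∀ a, ∃ m, (φ a).hom₁⟦(1 : ℤ)⟧' ≫ l = (T a).mor₁⟦(1 : ℤ)⟧' ≫ m := fun a => by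
      have := (T a).rotate.yoneda_exact₃ (rot_of_distTriang _ (hT a))
        ((φ a).hom₁⟦(1 : ℤ)⟧' ≫ l) (by
          have := hg a
          rw [← Category.assoc, ← (φ a).comm₃, Category.assoc] at this
          exact this)
      obtain ⟨m, hm⟩ := this
      have h2 : ∀ m' : (T a).obj₂⟦(1 : ℤ)⟧ ⟶ Y, (-(T a).mor₁⟦(1 : ℤ)⟧') ≫ m' =
        (T a).mor₁⟦(1 : ℤ)⟧' ≫ (-m') := fun m' => by simp
      exact ⟨-(show (T a).obj₂⟦(1 : ℤ)⟧ ⟶ Y from m), hm.trans (h2 m)⟩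
    choose m hm using this
    obtain ⟨m', hm'⟩ := h₂'.1 Y m
    have : l = T'.mor₁⟦(1 : ℤ)⟧' ≫ m' := h₁'.2 _ _ _ fun a => by
      rw [hm, ← hm', ← Category.assoc, ← Category.assoc, ← Functor.map_comp, ← Functor.map_comp,
        (φ a).comm₁]
    rw [this, ← Category.assoc, comp_distTriang_mor_zero₃₁ _ hT']
    simp

theorem trW {ι : Type*} (P : ObjectProperty C)
    (hP : ∀ (X : ι → C) (S : C) (i : ∀ a, X a ⟶ S), IsCop X S i → (∀ a, P (X a)) → P S)
    {X Y : ι → C} {S S' : C} {i : ∀ a, X a ⟶ S} {j : ∀ a, Y a ⟶ S'}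
    (h₁ : IsCop X S i) (h₂ : IsCop Y S' j) (f : ∀ a, X a ⟶ Y a) (g : S ⟶ S')
    (hg : ∀ a, i a ≫ g = f a ≫ j a) (hf : ∀ a, P.trW (f a)) : P.trW g := by
  choose Z p q hT hZ using hf
  obtain ⟨Z', p', q', hT'⟩ := distinguished_cocone_triangle g
  have : ∀ a, ∃ φ : Triangle.mk (f a) (p a) (q a) ⟶ Triangle.mk g p' q', φ.hom₁ = i a ∧
      φ.hom₂ = j a := fun a => by
    refine ⟨completeDistinguishedTriangleMorphism _ _ (hT a) hT' (i a) (j a) (hg a).symm, rfl, rfl⟩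
  choose φ hφ₁ hφ₂ using this
  refine ⟨Z', p', q', hT', hP _ _ _ (triangle _ hT _ hT' φ ?_ ?_) hZ⟩
  · have : (fun a => (φ a).hom₁) = i := funext hφ₁
    rw [this]; exact h₁
  · have : (fun a => (φ a).hom₂) = j := funext hφ₂
    rw [this]; exact h₂

end Tri
end IsCop

section Hocolim
variable {C : Type*} [Category* C] [HasZeroObject C]
    [Preadditive C] [HasShift C ℤ] [∀ n : ℤ, (shiftFunctor C n).Additive] [Pretriangulated C]
    [IsTriangulated C]

theorem trW_of_postcomp (P : ObjectProperty C) [P.IsTriangulated] [P.IsClosedUnderIsomorphisms]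
    {X Y Z : C} (f : X ⟶ Y) (g : Y ⟶ Z) (hg : P.trW g) (hfg : P.trW (f ≫ g)) : P.trW f := by
  obtain ⟨Z₁₂, v₁₂, w₁₂, H₁₂⟩ := distinguished_cocone_triangle f
  obtain ⟨Z₂₃, v₂₃, w₂₃, H₂₃⟩ := distinguished_cocone_triangle g
  obtain ⟨Z₁₃, v₁₃, w₁₃, H₁₃⟩ := distinguished_cocone_triangle (f ≫ g)
  refine ⟨_, _, _, H₁₂, P.ext_of_isTriangulatedClosed₁
      _ (Triangulated.someOctahedron rfl H₁₂ H₂₃ H₁₃).mem ?_ ?_⟩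
  · exact (P.trW_iff_of_distinguished _ H₁₃).1 hfg
  · exact (P.trW_iff_of_distinguished _ H₂₃).1 hg

/-- Telescope argument. -/
theorem prop_of_telescope (P : ObjectProperty C) [P.IsTriangulated] [P.IsClosedUnderIsomorphisms]
    (hP : ∀ (X : ℕ → C) (S : C) (i : ∀ a, X a ⟶ S), IsCop X S i → (∀ a, P (X a)) → P S)
    (W : ℕ → C) (d : ∀ n, W n ⟶ W (n + 1)) (hd : ∀ n, P.trW (d n))
    (S : C) (i : ∀ a, W a ⟶ S) (h : IsCop W S i)
    (S₀ : C) (i₀ : ℕ → (W 0 ⟶ S₀)) (h₀ : IsCop (fun _ : ℕ => W 0) S₀ i₀)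
    (hs : ∀ s : S ⟶ S, (∀ n, i n ≫ s = d n ≫ i (n + 1)) → IsIso (𝟙 S - s)) : P (W 0) := by
  obtain ⟨s, hs'⟩ := h.1 S (fun n => d n ≫ i (n + 1))
  obtain ⟨s₀, hs₀⟩ := h₀.1 S₀ (fun n => i₀ (n + 1))
  have hiso := hs s hs'
  let D : ∀ n, W 0 ⟶ W n := fun n => Nat.rec (𝟙 _) (fun n f => f ≫ d n) n
  have hD0 : D 0 = 𝟙 _ := rfl
  have hDs : ∀ n, D (n + 1) = D n ≫ d n := fun n => rfl
  clear_value D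
  have hD : ∀ n, P.trW (D n) := fun n => by
    induction n with
    | zero => rw [hD0]; exact P.trW_of_isIso _
    | succ n ih => rw [hDs]; exact P.trW.comp_mem _ _ ih (hd n)
  obtain ⟨c, hc⟩ := h₀.1 S (fun n => D n ≫ i n)
  have hcW : P.trW c := IsCop.trW P hP h₀ h D c hc hD
  have hcomm : (𝟙 _ - s₀) ≫ c = c ≫ (𝟙 _ - s) := by
    refine h₀.2 _ _ _ fun n => ?_
    simp only [Preadditive.sub_comp, Preadditive.comp_sub, Category.id_comp, Category.comp_id]
    rw [← Category.assoc, ← Category.assoc, hs₀, hc, hc, hDs, Category.assoc, Category.assoc, hs']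
  have h1 : P.trW (𝟙 _ - s₀) := by
    refine trW_of_postcomp P _ c hcW ?_
    rw [hcomm]
    exact P.trW.comp_mem _ _ hcW (P.trW_of_isIso _)
  obtain ⟨r, hr⟩ := h₀.1 S₀ (fun n => - ∑ k ∈ Finset.range n, i₀ k)
  obtain ⟨σ, hσ⟩ := h₀.1 (W 0) (fun n => 𝟙 _)
  have hr1 : (𝟙 _ - s₀) ≫ r = 𝟙 _ := by
    refine h₀.2 _ _ _ fun n => ?_
    simp only [Preadditive.sub_comp, Preadditive.comp_sub, Category.id_comp, Category.comp_id]
    rw [← Category.assoc, hs₀, hr, hr, Finset.sum_range_succ]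
    abel
  have hr2 : r ≫ (𝟙 _ - s₀) = 𝟙 _ - σ ≫ i₀ 0 := by
    refine h₀.2 _ _ _ fun n => ?_
    rw [← Category.assoc, hr]
    simp only [Preadditive.neg_comp, Preadditive.sum_comp, Preadditive.comp_sub, Category.comp_id,
      hs₀]
    rw [← Category.assoc, hσ, Category.id_comp]
    have := Finset.sum_range_sub' i₀ n
    rw [Finset.sum_sub_distrib] at this
    rw [neg_sub_neg, ← neg_sub, this]; abel
  have hσ0 : (𝟙 _ - s₀) ≫ σ = 0 := by
    refine h₀.2 _ _ _ fun n => ?_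
    simp only [Preadditive.sub_comp, Preadditive.comp_sub, Category.id_comp]
    rw [← Category.assoc, hs₀, hσ, hσ]
    simp
  obtain ⟨Z, q, w, hT, hZ⟩ := h1
  obtain ⟨σ', hσ'⟩ : ∃ σ' : Z ⟶ W 0, σ = q ≫ σ' := Triangle.yoneda_exact₂ _ hT σ hσ0
  have : Mono (𝟙 _ - s₀) := mono_of_mono_fac hr1
  have : Epi q := Triangle.epi₂ _ hT ((Triangle.mor₃_eq_zero_iff_mono₁ _ hT).2 this)
  have hq : (𝟙 _ - s₀) ≫ q = 0 := comp_distTriang_mor_zero₁₂ _ hT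
  refine P.prop_of_iso (X := Z) ⟨σ', i₀ 0 ≫ q, ?_, ?_⟩ hZ
  · rw [← cancel_epi q, ← Category.assoc, ← hσ', ← Category.assoc]
    have : (𝟙 _ - σ ≫ i₀ 0) ≫ q = 0 := by rw [← hr2, Category.assoc, hq, comp_zero]
    rw [Preadditive.sub_comp, sub_eq_zero] at this
    rw [← this]; simp
  · rw [Category.assoc, ← hσ', hσ]

end Hocolim

theorem IsCop.map_of_preserves {C D : Type*} [Category* C] [Category* D] {ι : Type*} {X : ι → C}
    {S : C} {i : ∀ a, X a ⟶ S} (h : IsCop X S i) (F : C ⥤ D)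
    [PreservesColimit (Discrete.functor X) F] :
    IsCop (fun a => F.obj (X a)) (F.obj S) (fun a => F.map (i a)) := by
  obtain ⟨hc⟩ := h.isColimit
  exact IsCop.of_isColimit (isColimitCofanMkObjOfIsColimit F X _ hc)

theorem IsCop.exists_iso {C : Type*} [Category* C] {ι : Type*} {X : ι → C}
    {S S' : C} {i : ∀ a, X a ⟶ S} {i' : ∀ a, X a ⟶ S'} (h : IsCop X S i) (h' : IsCop X S' i') :
    Nonempty (S ≅ S') := by
  obtain ⟨f, hf⟩ := h.1 _ i'
  obtain ⟨g, hg⟩ := h'.1 _ i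
  exact ⟨⟨f, g, h.2 _ _ _ fun a => by rw [← Category.assoc, hf, hg, Category.comp_id],
    h'.2 _ _ _ fun a => by rw [← Category.assoc, hg, hf, Category.comp_id]⟩⟩

theorem IsCop.exists_of_hasCoproduct {C : Type*} [Category* C] {ι : Type*} (X : ι → C)
    [HasCoproduct X] : ∃ (S : C) (i : ∀ a, X a ⟶ S), IsCop X S i :=
  ⟨_, _, IsCop.of_isColimit (coproductIsCoproduct X)⟩

theorem IsCop.map_localization {C D : Type*} [Category* C] [Category* D] (L : C ⥤ D)
    (W : MorphismProperty C) [L.IsLocalization W] [W.HasLeftCalculusOfFractions]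
    [W.HasRightCalculusOfFractions] {ι : Type*}
    (hex : ∀ X : ι → C, ∃ (S : C) (i : ∀ a, X a ⟶ S), IsCop X S i)
    (hW : ∀ (X Y : ι → C) (S S' : C) (i : ∀ a, X a ⟶ S) (j : ∀ a, Y a ⟶ S')
      (_ : IsCop X S i) (_ : IsCop Y S' j) (f : ∀ a, X a ⟶ Y a) (g : S ⟶ S')
      (_ : ∀ a, i a ≫ g = f a ≫ j a) (_ : ∀ a, W (f a)), W g)
    {X : ι → C} {S : C} {i : ∀ a, X a ⟶ S} (h : IsCop X S i) :
    IsCop (fun a => L.obj (X a)) (L.obj S) (fun a => L.map (i a)) := by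
  have : L.EssSurj := Localization.essSurj L W
  constructor
  · suffices ∀ (Y : C) (f : ∀ a, L.obj (X a) ⟶ L.obj Y),
      ∃ g : L.obj S ⟶ L.obj Y, ∀ a, L.map (i a) ≫ g = f a by
      intro Y f
      obtain ⟨g, hg⟩ := this (L.objPreimage Y) (fun a => f a ≫ (L.objObjPreimageIso Y).inv)
      exact ⟨g ≫ (L.objObjPreimageIso Y).hom, fun a => by
        rw [← Category.assoc, hg]; simp⟩
    intro Y f
    have := fun a => Localization.exists_rightFraction L W (f a)
    choose φ hφ using this
    obtain ⟨S', i', h'⟩ := hex (fun a => (φ a).X')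
    obtain ⟨s, hs⟩ := h'.1 S (fun a => (φ a).s ≫ i a)
    obtain ⟨g, hg⟩ := h'.1 Y (fun a => (φ a).f)
    have hsW : W s := hW _ _ _ _ _ _ h' h (fun a => (φ a).s) s hs (fun a => (φ a).hs)
    have := Localization.inverts L W s hsW
    refine ⟨inv (L.map s) ≫ L.map g, fun a => ?_⟩
    have := Localization.inverts L W (φ a).s (φ a).hs
    rw [← cancel_epi (L.map (φ a).s), hφ, MorphismProperty.RightFraction.map_s_comp_map,
      ← Category.assoc, ← Category.assoc, ← L.map_comp, ← hs, ← hg, L.map_comp]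
    simp
  · suffices ∀ (Y : C) (g g' : L.obj S ⟶ L.obj Y),
      (∀ a, L.map (i a) ≫ g = L.map (i a) ≫ g') → g = g' by
      intro Y g g' hg
      rw [← cancel_mono (L.objObjPreimageIso Y).inv]
      exact this _ _ _ fun a => by rw [← Category.assoc, hg, Category.assoc]
    intro Y g g' hg
    obtain ⟨φ, rfl, rfl⟩ := Localization.exists_leftFraction₂ L W g g'
    have h1 : ∀ a, L.map (i a ≫ φ.f) = L.map (i a ≫ φ.f') := fun a => by
      have := congrArg (· ≫ L.map φ.s) (hg a)
      simp only [Category.assoc] at this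
      have e1 := MorphismProperty.LeftFraction.map_comp_map_s φ.fst L (Localization.inverts L W)
      have e2 := MorphismProperty.LeftFraction.map_comp_map_s φ.snd L (Localization.inverts L W)
      dsimp at e1 e2
      rw [e1, e2] at this
      simpa using this
    have := fun a => (MorphismProperty.map_eq_iff_precomp L W _ _).1 (h1 a)
    choose X' t ht ht' using this
    obtain ⟨S', i', h'⟩ := hex X'
    obtain ⟨s, hs⟩ := h'.1 S (fun a => t a ≫ i a)
    have hsW : W s := hW _ _ _ _ _ _ h' h t s hs ht
    have e3 : L.map φ.f = L.map φ.f' := by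
      refine (MorphismProperty.map_eq_iff_precomp L W _ _).2 ⟨S', s, hsW, h'.2 _ _ _ fun a => ?_⟩
      rw [← Category.assoc, hs, ← Category.assoc, hs, Category.assoc, ht', Category.assoc]
    have := Localization.inverts L W φ.s φ.hs
    rw [← cancel_mono (L.map φ.s)]
    have e1 := MorphismProperty.LeftFraction.map_comp_map_s φ.fst L (Localization.inverts L W)
    have e2 := MorphismProperty.LeftFraction.map_comp_map_s φ.snd L (Localization.inverts L W)
    exact e1.trans (e3.trans e2.symm)

section Complexes

variable {R : Type u} [CommRing R] {ι : Type u}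

theorem IsCop.eval {K : ι → CochainComplex (ModuleCat.{u} R) ℤ}
    {S : CochainComplex (ModuleCat.{u} R) ℤ} {i : ∀ a, K a ⟶ S} (h : IsCop K S i) (n : ℤ) :
    IsCop (fun a => (K a).X n) (S.X n) (fun a => (i a).f n) :=
  h.map_of_preserves (HomologicalComplex.eval (ModuleCat.{u} R) (ComplexShape.up ℤ) n)

theorem IsCop.quotient {K : ι → CochainComplex (ModuleCat.{u} R) ℤ}
    {S : CochainComplex (ModuleCat.{u} R) ℤ} {i : ∀ a, K a ⟶ S} (h : IsCop K S i) :
    IsCop (fun a => (HomotopyCategory.quotient (ModuleCat.{u} R) (ComplexShape.up ℤ)).obj (K a))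
      ((HomotopyCategory.quotient (ModuleCat.{u} R) (ComplexShape.up ℤ)).obj S)
      (fun a => (HomotopyCategory.quotient (ModuleCat.{u} R) (ComplexShape.up ℤ)).map (i a)) := by
  constructor
  · intro Y f
    obtain ⟨Y, rfl⟩ := HomotopyCategory.quotient_obj_surjective Y
    choose f' hf' using fun a => (HomotopyCategory.quotient _ _).map_surjective (f a)
    obtain ⟨g, hg⟩ := h.1 Y f'
    exact ⟨(HomotopyCategory.quotient _ _).map g, fun a => by rw [← Functor.map_comp, hg, hf']⟩
  · suffices ∀ (Y : CochainComplex (ModuleCat.{u} R) ℤ) (g : S ⟶ Y),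
        (∀ a, (HomotopyCategory.quotient _ _).map (i a ≫ g) = 0) →
        (HomotopyCategory.quotient _ _).map g = 0 by
      intro Y g g' hg
      obtain ⟨Y, rfl⟩ := HomotopyCategory.quotient_obj_surjective Y
      obtain ⟨g, rfl⟩ := (HomotopyCategory.quotient _ _).map_surjective g
      obtain ⟨g', rfl⟩ := (HomotopyCategory.quotient _ _).map_surjective g'
      rw [← sub_eq_zero, ← Functor.map_sub]
      refine this _ _ fun a => ?_
      rw [Preadditive.comp_sub, Functor.map_sub, Functor.map_comp, Functor.map_comp, hg, sub_self]
    intro Y g hg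
    simp only [HomotopyCategory.quotient_map_eq_zero_iff] at hg ⊢
    have H := fun a => (hg a).some
    choose hom hhom using fun p q => (h.eval p).1 (Y.X q) (fun a => (H a).hom p q)
    refine ⟨⟨hom, fun p q hpq => (h.eval p).2 _ _ _ fun a => ?_, fun p => ?_⟩⟩
    · rw [hhom, (H a).zero _ _ hpq, comp_zero]
    · refine (h.eval p).2 _ _ _ fun a => ?_
      have := (H a).comm p
      rw [dNext_eq _ (show (ComplexShape.up ℤ).Rel p (p + 1) from rfl),
        prevD_eq _ (show (ComplexShape.up ℤ).Rel (p - 1) p by simp)] at this ⊢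
      simp only [HomologicalComplex.comp_f, HomologicalComplex.zero_f, add_zero] at this ⊢
      rw [this, Preadditive.comp_add, ← Category.assoc, (i a).comm, Category.assoc, hhom,
        ← Category.assoc, hhom]

/-- Homology of a coproduct is jointly generated by the homologies of the summands. -/
theorem IsCop.homologyMap_eq_zero {K : ι → CochainComplex (ModuleCat.{u} R) ℤ}
    {S : CochainComplex (ModuleCat.{u} R) ℤ} {i : ∀ a, K a ⟶ S} (h : IsCop K S i)
    {L : CochainComplex (ModuleCat.{u} R) ℤ} (f : S ⟶ L) (n : ℤ)
    (hf : ∀ a, HomologicalComplex.homologyMap (i a ≫ f) n = 0) :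
    HomologicalComplex.homologyMap f n = 0 := by
  classical
  have : ∀ a, ∃ p : S ⟶ K a, i a ≫ p = 𝟙 _ ∧ ∀ b, b ≠ a → i b ≫ p = 0 := fun a => by
    obtain ⟨p, hp⟩ := h.1 (K a) (fun b => if hb : b = a then eqToHom (by rw [hb]) else 0)
    exact ⟨p, by rw [hp]; simp, fun b hb => by rw [hp]; simp [hb]⟩
  choose p hp hp' using this
  have key : ∀ z : S.X n, ∃ F : Finset ι, ∀ G : Finset ι, F ⊆ G →
      (∑ a ∈ G, (p a ≫ i a)).f n z = z := by
    let N : Submodule R (S.X n) := ⨆ a, LinearMap.range ((i a).f n).hom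
    have hN : N = ⊤ := by
      have : ModuleCat.ofHom N.mkQ = 0 := by
        refine (h.eval n).2 _ _ _ fun a => ?_
        ext x
        have : (i a).f n x ∈ N := Submodule.mem_iSup_of_mem a ⟨x, rfl⟩
        simpa using this
      have h2 : N.mkQ = 0 := congrArg ModuleCat.Hom.hom this
      rw [← N.ker_mkQ, h2, LinearMap.ker_zero]
    intro z
    have hz : z ∈ N := by rw [hN]; trivial
    refine Submodule.iSup_induction _ (motive := fun z => ∃ F : Finset ι, ∀ G : Finset ι, F ⊆ G →
      (∑ a ∈ G, (p a ≫ i a)).f n z = z) hz ?_ ?_ ?_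
    · rintro a _ ⟨x, rfl⟩
      refine ⟨{a}, fun G hG => ?_⟩
      have : i a ≫ (∑ b ∈ G, (p b ≫ i b)) = i a := by
        rw [Preadditive.comp_sum, Finset.sum_eq_single a]
        · rw [← Category.assoc, hp, Category.id_comp]
        · intro b _ hb
          rw [← Category.assoc, hp' b a hb.symm, zero_comp]
        · intro hh; exact absurd (hG (Finset.mem_singleton_self a)) hh
      have := congrArg (fun φ => HomologicalComplex.Hom.f φ n) this
      exact congrArg (fun φ => φ.hom x) this
    · exact ⟨∅, fun G _ => by simp⟩
    · rintro x y ⟨F, hF⟩ ⟨F', hF'⟩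
      exact ⟨F ∪ F', fun G hG => by
        rw [map_add, hF G (Finset.union_subset_left hG), hF' G (Finset.union_subset_right hG)]⟩
  rw [← cancel_epi (S.homologyπ n), comp_zero]
  ext z
  obtain ⟨F, hF⟩ := key (S.iCycles n z)
  have hF := hF F subset_rfl
  set e := ∑ a ∈ F, (p a ≫ i a) with he
  have h1 : HomologicalComplex.cyclesMap e n z = z := by
    apply (ModuleCat.mono_iff_injective (S.iCycles n)).1 inferInstance
    have := congrArg (fun φ => φ.hom z) (HomologicalComplex.cyclesMap_i e n)
    exact this.trans hF
  have h2 : HomologicalComplex.homologyMap (e ≫ f) n = 0 := by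
    rw [he, Preadditive.sum_comp]
    refine ((HomologicalComplex.homologyFunctor (ModuleCat.{u} R) (ComplexShape.up ℤ) n).map_sum
      _ _).trans ?_
    refine Finset.sum_eq_zero fun a _ => ?_
    rw [Category.assoc, HomologicalComplex.homologyFunctor_map,
      HomologicalComplex.homologyMap_comp, hf, comp_zero]; rfl
  have h3 : HomologicalComplex.cyclesMap e n ≫ S.homologyπ n ≫
      HomologicalComplex.homologyMap f n = 0 := by
    rw [← Category.assoc, ← HomologicalComplex.homologyπ_naturality, Category.assoc,
      ← HomologicalComplex.homologyMap_comp, h2, comp_zero]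
  have h4 := congrArg (fun φ => φ.hom z) h3
  have h5 : (S.homologyπ n ≫ HomologicalComplex.homologyMap f n) (HomologicalComplex.cyclesMap e n z)
    = 0 := h4
  rw [h1] at h5
  exact h5

theorem IsCop.acyclic {K : ι → CochainComplex (ModuleCat.{u} R) ℤ}
    {S : CochainComplex (ModuleCat.{u} R) ℤ} {i : ∀ a, K a ⟶ S} (h : IsCop K S i)
    (hK : ∀ a, (K a).Acyclic) : S.Acyclic := by
  intro n
  rw [HomologicalComplex.exactAt_iff_isZero_homology, IsZero.iff_id_eq_zero,
    ← HomologicalComplex.homologyMap_id]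
  refine h.homologyMap_eq_zero _ n fun a => ?_
  exact ((HomologicalComplex.exactAt_iff_isZero_homology _ _).1 (hK a n)).eq_of_src _ _

variable [HasDerivedCategory.{w} (ModuleCat.{u} R)]

theorem IsCop.exists_homotopyCategory
    (X : ι → HomotopyCategory (ModuleCat.{u} R) (ComplexShape.up ℤ)) :
    ∃ (S : CochainComplex (ModuleCat.{u} R) ℤ) (K : ι → CochainComplex (ModuleCat.{u} R) ℤ)
      (i : ∀ a, K a ⟶ S), IsCop K S i ∧
      ∀ a, (HomotopyCategory.quotient _ _).obj (K a) = X a := by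
  choose K hK using fun a => HomotopyCategory.quotient_obj_surjective (X a)
  obtain ⟨S, i, h⟩ := IsCop.exists_of_hasCoproduct K
  exact ⟨S, K, i, h, hK⟩

theorem IsCop.Qh {X : ι → HomotopyCategory (ModuleCat.{u} R) (ComplexShape.up ℤ)} {S}
    {i : ∀ a, X a ⟶ S} (h : IsCop X S i) :
    IsCop (fun a => DerivedCategory.Qh.obj (X a)) (DerivedCategory.Qh.obj S)
      (fun a => DerivedCategory.Qh.map (i a)) := by
  refine IsCop.map_localization DerivedCategory.Qh
    (HomotopyCategory.subcategoryAcyclic (ModuleCat.{u} R)).trW ?_ ?_ h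
  · intro X
    obtain ⟨S, K, i, h, hK⟩ := IsCop.exists_homotopyCategory X
    obtain rfl := funext hK
    exact ⟨_, _, h.quotient⟩
  · intro X Y S S' i j h h' f g hg hf
    refine IsCop.trW _ ?_ h h' f g hg hf
    intro X S i h hX
    obtain ⟨S', K, i', h', hK⟩ := IsCop.exists_homotopyCategory X
    obtain rfl := funext hK
    obtain ⟨e⟩ := h'.quotient.exists_iso h
    refine ObjectProperty.prop_of_iso _ e ?_
    rw [HomotopyCategory.quotient_obj_mem_subcategoryAcyclic_iff_acyclic]
    exact h'.acyclic fun a =>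
      (HomotopyCategory.quotient_obj_mem_subcategoryAcyclic_iff_acyclic _).1 (hX a)

theorem IsCop.Q {K : ι → CochainComplex (ModuleCat.{u} R) ℤ}
    {S : CochainComplex (ModuleCat.{u} R) ℤ} {i : ∀ a, K a ⟶ S} (h : IsCop K S i) :
    IsCop (fun a => DerivedCategory.Q.obj (K a)) (DerivedCategory.Q.obj S)
      (fun a => DerivedCategory.Q.map (i a)) := by
  have := h.quotient.Qh.of_iso (fun a => ((DerivedCategory.quotientCompQhIso _).app (K a)).symm)
    ((DerivedCategory.quotientCompQhIso _).app S)
  convert this using 2 with a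
  simp

end Complexes

section Derived

open DerivedCategory ZeroObject

variable {R : Type u} [CommRing R] [HasDerivedCategory.{w} (ModuleCat.{u} R)]

theorem homologyFunctor_map_Q_eq_zero_iff {K L : CochainComplex (ModuleCat.{u} R) ℤ} (f : K ⟶ L)
    (n : ℤ) : (homologyFunctor (ModuleCat.{u} R) n).map (Q.map f) = 0 ↔
      HomologicalComplex.homologyMap f n = 0 := by
  have h := (homologyFunctorFactors (ModuleCat.{u} R) n).hom.naturality f
  dsimp only [Functor.comp_map] at h
  constructor
  · intro hf
    rw [hf, zero_comp] at h
    exact (Iso.cancel_iso_hom_left ((homologyFunctorFactors (ModuleCat.{u} R) n).app K) _ _).1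
      (h.symm.trans comp_zero.symm)
  · intro hf
    have h' : ((HomologicalComplex.homologyFunctor (ModuleCat.{u} R) (ComplexShape.up ℤ) n).map f)
      = 0 := hf
    rw [h', comp_zero] at h
    exact (Iso.cancel_iso_hom_right _ _ ((homologyFunctorFactors (ModuleCat.{u} R) n).app L)).1
      (h.trans zero_comp.symm)

theorem exists_isCop_derived {ι : Type u} (X : ι → DerivedCategory (ModuleCat.{u} R)) :
    ∃ (K : ι → CochainComplex (ModuleCat.{u} R) ℤ) (S : CochainComplex (ModuleCat.{u} R) ℤ)
      (i : ∀ a, K a ⟶ S) (e : ∀ a, X a ≅ Q.obj (K a)), IsCop K S i ∧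
      IsCop X (Q.obj S) (fun a => (e a).hom ≫ Q.map (i a)) := by
  obtain ⟨S, i, h⟩ := IsCop.exists_of_hasCoproduct (fun a => Q.objPreimage (X a))
  refine ⟨_, S, i, fun a => (Q.objObjPreimageIso (X a)).symm, h, ?_⟩
  have := h.Q.of_iso (fun a => (Q.objObjPreimageIso (X a)).symm) (Iso.refl (Q.obj S))
  simpa using this

theorem isCop_homologyFunctor_map_eq_zero {ι : Type u} {X : ι → DerivedCategory (ModuleCat.{u} R)}
    {S : DerivedCategory (ModuleCat.{u} R)} {i : ∀ a, X a ⟶ S} (h : IsCop X S i)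
    {T : DerivedCategory (ModuleCat.{u} R)} (s : S ⟶ T) (n : ℤ)
    (hs : ∀ a, (homologyFunctor (ModuleCat.{u} R) n).map (i a ≫ s) = 0) :
    (homologyFunctor (ModuleCat.{u} R) n).map s = 0 := by
  obtain ⟨K, S', j, e, hK, hQ⟩ := exists_isCop_derived X
  obtain ⟨u, hu⟩ := hQ.1 _ i
  obtain ⟨v, hv⟩ := h.1 _ (fun a => (e a).hom ≫ Q.map (j a))
  have hvu : v ≫ u = 𝟙 S := h.2 _ _ _ fun a => by
    rw [← Category.assoc, hv, hu, Category.comp_id]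
  obtain ⟨Y', g, t, _, hg⟩ := left_fac (u ≫ s ≫ (Q.objObjPreimageIso T).inv)
  have h1 : HomologicalComplex.homologyMap g n = 0 := by
    refine hK.homologyMap_eq_zero g n fun a => ?_
    rw [← homologyFunctor_map_Q_eq_zero_iff]
    have : Q.map (j a ≫ g) = (e a).inv ≫ (i a ≫ s) ≫ (Q.objObjPreimageIso T).inv ≫ Q.map t := by
      rw [← hu a]
      simp only [Category.assoc, Iso.inv_hom_id_assoc]
      rw [reassoc_of% hg]
      simp
    rw [this, Functor.map_comp, Functor.map_comp, hs, zero_comp, comp_zero]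
  have h2 : s = v ≫ Q.map g ≫ inv (Q.map t) ≫ (Q.objObjPreimageIso T).hom := by
    rw [← reassoc_of% hg, reassoc_of% hvu]; simp
  rw [h2, Functor.map_comp, Functor.map_comp, (homologyFunctor_map_Q_eq_zero_iff g n).2 h1,
    zero_comp, comp_zero]

theorem homologyFunctor_map_shift_eq_zero {X Y : DerivedCategory (ModuleCat.{u} R)} (f : X ⟶ Y)
    (hf : ∀ n : ℤ, (homologyFunctor (ModuleCat.{u} R) n).map f = 0) (k n : ℤ) :
    (homologyFunctor (ModuleCat.{u} R) n).map (f⟦k⟧') = 0 := by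
  have h := (homologyFunctor (ModuleCat.{u} R) 0).shiftIso_hom_naturality k n (k + n) rfl f
  have h' : ((homologyFunctor (ModuleCat.{u} R) 0).shift (k + n)).map f = 0 := hf _
  rw [h', comp_zero] at h
  exact (Iso.cancel_iso_hom_right _ _
    (((homologyFunctor (ModuleCat.{u} R) 0).shiftIso k n (k + n) rfl).app Y)).1
      (h.trans zero_comp.symm)

theorem prop_of_resolution (P : ObjectProperty (DerivedCategory (ModuleCat.{u} R)))
    [P.IsTriangulated] [P.IsClosedUnderIsomorphisms]
    (hP : ∀ (X : ℕ → DerivedCategory (ModuleCat.{u} R)) (S : DerivedCategory (ModuleCat.{u} R))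
      (i : ∀ a, X a ⟶ S), IsCop X S i → (∀ a, P (X a)) → P S)
    (X M : ℕ → DerivedCategory (ModuleCat.{u} R)) (f : ∀ n, X (n + 1) ⟶ M n)
    (g : ∀ n, M n ⟶ X n) (δ : ∀ n, X n ⟶ (X (n + 1))⟦(1 : ℤ)⟧)
    (hT : ∀ n, Triangle.mk (f n) (g n) (δ n) ∈ distTriang _) (hM : ∀ n, P (M n))
    (hg : ∀ n k, Epi ((homologyFunctor (ModuleCat.{u} R) k).map (g n))) : P (X 0) := by
  have hδ : ∀ n k, (homologyFunctor (ModuleCat.{u} R) k).map (δ n) = 0 := fun n k => by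
    have := hg n k
    rw [← cancel_epi ((homologyFunctor (ModuleCat.{u} R) k).map (g n)), ← Functor.map_comp,
      comp_zero]
    have h0 : g n ≫ δ n = 0 := comp_distTriang_mor_zero₂₃ _ (hT n)
    rw [h0, Functor.map_zero]
  have hδW : ∀ n, P.trW (δ n) := fun n =>
    ObjectProperty.trW.mk' P (rot_of_distTriang _ (hT n)) (hM n)
  let W : ℕ → DerivedCategory (ModuleCat.{u} R) := fun n => (X n)⟦(n : ℤ)⟧
  let c : ∀ n : ℕ, ((X (n+1))⟦(1 : ℤ)⟧)⟦(n : ℤ)⟧ ≅ W (n + 1) := fun n =>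
    ((shiftFunctorAdd' (DerivedCategory (ModuleCat.{u} R)) (1 : ℤ) (n : ℤ) ((n + 1 : ℕ) : ℤ)
      (by push_cast; ring)).app (X (n + 1))).symm
  let d : ∀ n, W n ⟶ W (n + 1) := fun n => (δ n)⟦(n : ℤ)⟧' ≫ (c n).hom
  have hd : ∀ n, P.trW (d n) := fun n =>
    P.trW.comp_mem _ _ ((hδW n).shift (P := P) n) (P.trW_of_isIso _)
  have hd0 : ∀ n k, (homologyFunctor (ModuleCat.{u} R) k).map (d n) = 0 := fun n k => by
    rw [Functor.map_comp, homologyFunctor_map_shift_eq_zero _ (hδ n), zero_comp]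
  have hex : ∀ Y : ℕ → DerivedCategory (ModuleCat.{u} R), ∃ S i, IsCop Y S i := fun Y => by
    obtain ⟨K, S, i, e, -, h⟩ := exists_isCop_derived (ι := ULift.{u} ℕ) (fun n => Y n.down)
    exact ⟨_, _, h.reindex Equiv.ulift.symm⟩
  obtain ⟨S, i, h⟩ := hex W
  obtain ⟨S₀, i₀, h₀⟩ := hex (fun _ => W 0)
  have : P (W 0) := by
    refine prop_of_telescope P hP W d hd S i h S₀ i₀ h₀ fun s hs => ?_
    rw [isIso_iff]
    intro k
    have h' := h.reindex (Equiv.ulift.{u})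
    have : (homologyFunctor (ModuleCat.{u} R) k).map s = 0 :=
      isCop_homologyFunctor_map_eq_zero h' s k fun a => by
        rw [hs, Functor.map_comp, hd0, zero_comp]
    rw [Functor.map_sub, this, sub_zero]
    infer_instance
  exact P.prop_of_iso ((shiftFunctorZero _ ℤ).app (X 0)) this

theorem IsLocalizingSubcategory.facts {L : Set (DerivedCategory (ModuleCat.{u} R))}
    (hL : IsLocalizingSubcategory.{u} L) : 
    ObjectProperty.IsTriangulated (fun X => X ∈ L : ObjectProperty _) ∧
    ObjectProperty.IsClosedUnderIsomorphisms (fun X => X ∈ L : ObjectProperty _) := by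
  let P : ObjectProperty (DerivedCategory (ModuleCat.{u} R)) := fun X => X ∈ L
  have hi : P.IsClosedUnderIsomorphisms := ⟨fun e h => hL.mem_of_iso e h⟩
  have hs : P.IsStableUnderShift ℤ := ⟨fun n => ⟨fun X hX => hL.shift_mem X n hX⟩⟩
  have h3 : P.IsTriangulatedClosed₃ := ObjectProperty.IsTriangulatedClosed₃.mk' hL.cone_mem
  have h2 : P.IsTriangulatedClosed₂ := ObjectProperty.IsTriangulatedClosed₂.of_isTriangulatedClosed₃
  have h0 : P.ContainsZero := by
    refine ⟨0, isZero_zero _, ?_⟩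
    have : IsCop (fun x : PEmpty.{u+1} => (x.elim : DerivedCategory (ModuleCat.{u} R))) 0
      (fun x => x.elim) := ⟨fun Y f => ⟨0, fun a => a.elim⟩,
        fun Y g g' _ => (isZero_zero _).eq_of_src _ _⟩
    exact hL.coproduct_mem _ (fun a => a.elim) _ this.isColimit.some
  exact ⟨{}, hi⟩

theorem IsLocalizingSubcategory.isCop_mem {L : Set (DerivedCategory (ModuleCat.{u} R))}
    (hL : IsLocalizingSubcategory.{u} L) {ι : Type u} {X : ι → DerivedCategory (ModuleCat.{u} R)}
    {S i} (h : IsCop X S i) (hX : ∀ a, X a ∈ L) : S ∈ L :=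
  hL.coproduct_mem _ hX _ h.isColimit.some

end Derived

theorem epi_of_comp_iso' {C : Type*} [Category* C] {X Y Z : C} (f : X ⟶ Y) (e : Y ≅ Z)
    (h : Epi (f ≫ e.hom)) : Epi f := (epi_comp_iff_of_isIso f e.hom).1 h

section Flat

variable {R : Type u} [CommRing R]

theorem IsAbsolutelyFlat.flat (hreg : IsAbsolutelyFlat R) (M : Type u) [AddCommGroup M]
    [Module R M] : Module.Flat R M := by
  rw [Module.Flat.iff_rTensor_injective]
  intro I hI
  have hid : IsIdempotentElem I := by
    refine le_antisymm Ideal.mul_le_left fun r hr => ?_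
    obtain ⟨x, hx⟩ := hreg r
    have : r = r * (r * x) := by rw [← mul_assoc, ← pow_two]; exact hx
    rw [this]
    exact Ideal.mul_mem_mul hr (I.mul_mem_right _ hr)
  obtain ⟨e, he, rfl⟩ := (Ideal.isIdempotentElem_iff_of_fg I hI).1 hid
  let p : R →ₗ[R] (Ideal.span {e} : Ideal R) :=
    (LinearMap.toSpanSingleton R (Ideal.span {e} : Ideal R)
      ⟨e, Ideal.subset_span (Set.mem_singleton e)⟩)
  have hp : p ∘ₗ (Ideal.span {e} : Ideal R).subtype = LinearMap.id := by
    ext ⟨x, hx⟩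
    obtain ⟨y, rfl⟩ := Ideal.mem_span_singleton'.1 hx
    simp [p, mul_assoc, he.eq]
  have h2 : LinearMap.rTensor M p ∘ₗ LinearMap.rTensor M (Ideal.span {e} : Ideal R).subtype
      = LinearMap.id := by
    rw [← LinearMap.rTensor_comp, hp, LinearMap.rTensor_id]
  exact Function.LeftInverse.injective (g := LinearMap.rTensor M p)
    fun x => LinearMap.congr_fun h2 x

/-- Tensoring a fixed complex with a varying module. -/
noncomputable def Phi (A : CochainComplex (ModuleCat.{u} R) ℤ) :
    ModuleCat.{u} R ⥤ CochainComplex (ModuleCat.{u} R) ℤ where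
  obj N := ((tensorLeft N).mapHomologicalComplex (ComplexShape.up ℤ)).obj A
  map f := (NatTrans.mapHomologicalComplex ((curriedTensor (ModuleCat.{u} R)).map f)
    (ComplexShape.up ℤ)).app A
  map_id N := by ext; simp
  map_comp f g := by ext; simp

instance (A : CochainComplex (ModuleCat.{u} R) ℤ) : (Phi A).PreservesZeroMorphisms where
  map_zero M N := by
    ext n : 1
    exact MonoidalPreadditive.zero_whiskerRight

theorem Phi_shortExact (hreg : IsAbsolutelyFlat R) (A : CochainComplex (ModuleCat.{u} R) ℤ)
    (S : ShortComplex (ModuleCat.{u} R)) (hS : S.ShortExact) : (S.map (Phi A)).ShortExact := by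
  refine HomologicalComplex.shortExact_of_degreewise_shortExact _ fun n => ?_
  have := hreg.flat (A.X n)
  exact hS.map_of_exact (tensorRight (A.X n))

theorem Phi_epi (hreg : IsAbsolutelyFlat R) (A : CochainComplex (ModuleCat.{u} R) ℤ)
    {M N : ModuleCat.{u} R} (f : M ⟶ N) [Epi f] (n : ℤ) :
    Epi (HomologicalComplex.homologyMap ((Phi A).map f) n) := by
  have := hreg.flat M
  have := hreg.flat N
  have h := NatTrans.app_homology ((curriedTensor (ModuleCat.{u} R)).map f) (A.sc n)
  have h1 : Epi (((curriedTensor (ModuleCat.{u} R)).map f).app (A.sc n).homology) := by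
    rw [ModuleCat.epi_iff_surjective]
    exact LinearMap.rTensor_surjective _ ((ModuleCat.epi_iff_surjective f).1 inferInstance)
  rw [h] at h1
  have h2 := epi_of_epi (((HomologicalComplex.sc A n).mapHomologyIso
    ((curriedTensor (ModuleCat R)).obj M)).inv) (ShortComplex.homologyMap
      ((HomologicalComplex.sc A n).mapNatTrans ((curriedTensor (ModuleCat R)).map f)) ≫
        ((HomologicalComplex.sc A n).mapHomologyIso ((curriedTensor (ModuleCat R)).obj N)).hom)
  exact epi_of_comp_iso' _ _ h2

theorem Phi_isCop (A : CochainComplex (ModuleCat.{u} R) ℤ) {ι : Type u} {X : ι → ModuleCat.{u} R}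
    {S i} (h : IsCop X S i) :
    IsCop (fun a => (Phi A).obj (X a)) ((Phi A).obj S) (fun a => (Phi A).map (i a)) := by
  have hn : ∀ n, IsCop (fun a => ((Phi A).obj (X a)).X n) (((Phi A).obj S).X n)
      (fun a => ((Phi A).map (i a)).f n) := fun n => 
    h.map_of_preserves (tensorRight (A.X n))
  constructor
  · intro Y f
    choose g hg using fun n => (hn n).1 (Y.X n) (fun a => (f a).f n)
    refine ⟨{ f := g, comm' := fun p q _ => ?_ }, fun a => ?_⟩
    · refine (hn p).2 _ _ _ fun a => ?_
      rw [← Category.assoc, hg, (f a).comm, ← Category.assoc, ((Phi A).map (i a)).comm,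
        Category.assoc, hg]
    · ext n : 1
      exact hg n a
  · intro Y g g' hgg
    ext n : 1
    exact (hn n).2 _ _ _ fun a => congrArg (fun φ => HomologicalComplex.Hom.f φ n) (hgg a)

end Flat
theorem epi_iso_comp' {C : Type*} [Category* C] {X Y Z : C} (e : X ≅ Y) (f : Y ⟶ Z)
    (h : Epi f) : Epi (e.hom ≫ f) := epi_comp _ _

section ModClass

open DerivedCategory

variable {R : Type u} [CommRing R] [HasDerivedCategory.{w} (ModuleCat.{u} R)]

/-- The modules `N` such that `N ⊗ A` lies in `L`. -/
def ModMem (L : Set (DerivedCategory (ModuleCat.{u} R))) (A : CochainComplex (ModuleCat.{u} R) ℤ)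
    (N : ModuleCat.{u} R) : Prop := Q.obj ((Phi A).obj N) ∈ L

variable {L : Set (DerivedCategory (ModuleCat.{u} R))} {A : CochainComplex (ModuleCat.{u} R) ℤ}

theorem ModMem.of_iso (hL : IsLocalizingSubcategory.{u} L) {M N : ModuleCat.{u} R} (e : M ≅ N)
    (h : ModMem L A M) : ModMem L A N :=
  hL.mem_of_iso (Q.mapIso ((Phi A).mapIso e)) h

theorem ModMem.of_isCop (hL : IsLocalizingSubcategory.{u} L) {ι : Type u}
    {X : ι → ModuleCat.{u} R} {S i} (h : IsCop X S i) (hX : ∀ a, ModMem L A (X a)) :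
    ModMem L A S :=
  hL.isCop_mem (Phi_isCop A h).Q hX

theorem ModMem.of_shortExact (hreg : IsAbsolutelyFlat R) (hL : IsLocalizingSubcategory.{u} L)
    (S : ShortComplex (ModuleCat.{u} R)) (hS : S.ShortExact) (h₁ : ModMem L A S.X₁)
    (h₃ : ModMem L A S.X₃) : ModMem L A S.X₂ := by
  obtain ⟨_, _⟩ := hL.facts
  exact ObjectProperty.ext_of_isTriangulatedClosed₂ (fun X => X ∈ L : ObjectProperty _) _
    (triangleOfSES_distinguished (Phi_shortExact hreg A S hS)) h₁ h₃

theorem ModMem.of_resolution (hreg : IsAbsolutelyFlat R) (hL : IsLocalizingSubcategory.{u} L)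
    (Z M : ℕ → ModuleCat.{u} R) (f : ∀ n, Z (n + 1) ⟶ M n) (g : ∀ n, M n ⟶ Z n)
    (w : ∀ n, f n ≫ g n = 0) (h : ∀ n, (ShortComplex.mk (f n) (g n) (w n)).ShortExact)
    (hM : ∀ n, ModMem L A (M n)) : ModMem L A (Z 0) := by
  obtain ⟨_, _⟩ := hL.facts
  have hT := fun n => triangleOfSES_distinguished (Phi_shortExact hreg A _ (h n))
  refine prop_of_resolution (fun X => X ∈ L : ObjectProperty _)
    (fun X S i hh hX => hL.isCop_mem (hh.reindex Equiv.ulift.{u}) fun a => hX _)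
    (fun n => Q.obj ((Phi A).obj (Z n))) (fun n => Q.obj ((Phi A).obj (M n)))
    (fun n => Q.map ((Phi A).map (f n))) (fun n => Q.map ((Phi A).map (g n)))
    (fun n => triangleOfSESδ (Phi_shortExact hreg A _ (h n))) hT hM fun n k => ?_
  have := (h n).epi_g
  have h1 : Epi (HomologicalComplex.homologyMap ((Phi A).map (g n)) k) := Phi_epi hreg A (g n) k
  have h2 := (homologyFunctorFactors (ModuleCat.{u} R) k).hom.naturality ((Phi A).map (g n))
  refine epi_of_comp_iso' _ ((homologyFunctorFactors (ModuleCat.{u} R) k).app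
    ((Phi A).obj (Z n))) ?_
  have h3 := epi_iso_comp' ((homologyFunctorFactors (ModuleCat.{u} R) k).app ((Phi A).obj (M n)))
    (HomologicalComplex.homologyMap ((Phi A).map (g n)) k) h1
  exact h2 ▸ h3

/-- A class of modules in which every object is a quotient, with kernel in the class, of a member
of `ModMem L A` consists of members of `ModMem L A`. -/
theorem ModMem.of_class (hreg : IsAbsolutelyFlat R) (hL : IsLocalizingSubcategory.{u} L)
    (C : ModuleCat.{u} R → Prop)
    (hC : ∀ N, C N → ∃ (M : ModuleCat.{u} R) (g : M →ₗ[R] N), ModMem L A M ∧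
      Function.Surjective g ∧ C (ModuleCat.of R (LinearMap.ker g))) (N : ModuleCat.{u} R)
    (hN : C N) : ModMem L A N := by
  choose M g hM hg hker using hC
  let Z : ℕ → {N : ModuleCat.{u} R // C N} := fun n => Nat.rec ⟨N, hN⟩
    (fun _ N => ⟨ModuleCat.of R (LinearMap.ker (g N.1 N.2)), hker N.1 N.2⟩) n
  refine ModMem.of_resolution hreg hL (fun n => (Z n).1) (fun n => M (Z n).1 (Z n).2)
    (fun n => ModuleCat.ofHom (LinearMap.ker (g (Z n).1 (Z n).2)).subtype)
    (fun n => ModuleCat.ofHom (g (Z n).1 (Z n).2)) (fun n => ?_) (fun n => ?_)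
    (fun n => hM _ _)
  · ext x
    exact x.2
  · exact ModuleCat.shortComplex_shortExact _ (LinearMap.exact_subtype_ker_map _)
      (Submodule.injective_subtype _) (hg _ _)

theorem ModMem.of_submodule (hreg : IsAbsolutelyFlat R) (hL : IsLocalizingSubcategory.{u} L)
    (N : ModuleCat.{u} R) (N' : Submodule R N) (h₁ : ModMem L A (ModuleCat.of R N'))
    (h₃ : ModMem L A (ModuleCat.of R (N ⧸ N'))) : ModMem L A N := by
  refine ModMem.of_shortExact hreg hL (ShortComplex.mk (ModuleCat.ofHom N'.subtype)
    (ModuleCat.ofHom N'.mkQ) ?_) ?_ h₁ h₃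
  · ext x
    simp
  · exact ModuleCat.shortComplex_shortExact _ (LinearMap.exact_subtype_mkQ N')
      (Submodule.injective_subtype _) (Submodule.mkQ_surjective _)

theorem isCop_directSum {ι : Type u} (X : ι → Type u) [∀ a, AddCommGroup (X a)]
    [∀ a, Module R (X a)] [DecidableEq ι] : IsCop (fun a => ModuleCat.of R (X a))
      (ModuleCat.of R (DirectSum ι X)) (fun a => ModuleCat.ofHom (DirectSum.lof R ι X a)) := by
  constructor
  · intro Y f
    refine ⟨ModuleCat.ofHom (DirectSum.toModule R ι Y (fun a => (f a).hom)), fun a => ?_⟩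
    ext x
    simp
  · intro Y g g' h
    ext1
    refine DirectSum.linearMap_ext R fun a => ?_
    exact congrArg ModuleCat.Hom.hom (h a)

end ModClass
section RingPart

variable {R : Type u} [CommRing R]

/-- Modules on which the ideal `I` acts with local units. -/
def LU (I : Ideal R) (N : Type u) [AddCommGroup N] [Module R N] : Prop :=
  ∀ x : N, ∃ e ∈ I, e • x = x

theorem exists_lu_add {I : Ideal R} {N : Type u} [AddCommGroup N] [Module R N] {x y : N}
    (hx : ∃ e ∈ I, e • x = x) (hy : ∃ e ∈ I, e • y = y) : ∃ e ∈ I, e • (x + y) = x + y := by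
  obtain ⟨e, he, hx⟩ := hx
  obtain ⟨f, hf, hy⟩ := hy
  refine ⟨e + f - e * f, I.sub_mem (I.add_mem he hf) (I.mul_mem_right _ he), ?_⟩
  have h1 : (e + f - e * f) • x = x := by
    rw [sub_smul, add_smul, mul_comm, mul_smul, hx]; abel
  have h2 : (e + f - e * f) • y = y := by
    rw [sub_smul, add_smul, mul_smul, hy]; abel
  rw [smul_add, h1, h2]

theorem LU.submodule {I : Ideal R} {N : Type u} [AddCommGroup N] [Module R N] (h : LU I N)
    (N' : Submodule R N) : LU I N' := fun x => by
  obtain ⟨e, he, hx⟩ := h x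
  exact ⟨e, he, Subtype.ext hx⟩

theorem LU.quotient {I : Ideal R} {N : Type u} [AddCommGroup N] [Module R N] (h : LU I N)
    (N' : Submodule R N) : LU I (N ⧸ N') := fun x => by
  obtain ⟨x, rfl⟩ := N'.mkQ_surjective x
  obtain ⟨e, he, hx⟩ := h x
  exact ⟨e, he, by rw [← map_smul, hx]⟩

theorem LU.mono {I J : Ideal R} (hIJ : I ≤ J) {N : Type u} [AddCommGroup N] [Module R N]
    (h : LU I N) : LU J N := fun x => by
  obtain ⟨e, he, hx⟩ := h x
  exact ⟨e, hIJ he, hx⟩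

theorem LU.directSum {I : Ideal R} {ι : Type u} [DecidableEq ι] (X : ι → Type u)
    [∀ a, AddCommGroup (X a)] [∀ a, Module R (X a)] (h : ∀ a, LU I (X a)) :
    LU I (DirectSum ι X) := fun x => by
  induction x using DirectSum.induction_on with
  | zero => exact ⟨0, I.zero_mem, by simp⟩
  | of a x =>
    obtain ⟨e, he, hx⟩ := h a x
    refine ⟨e, he, ?_⟩
    rw [← DirectSum.lof_eq_of R, ← map_smul, hx]
  | add x y hx hy => exact exists_lu_add hx hy

theorem LU.smul_top (hreg : IsAbsolutelyFlat R) (I : Ideal R) (N : Type u) [AddCommGroup N]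
    [Module R N] : LU I ((I • ⊤ : Submodule R N)) := by
  rintro ⟨x, hx⟩
  have : ∃ e ∈ I, e • x = x := by
    refine Submodule.smul_induction_on hx (fun r hr n _ => ?_) (fun x y hx hy => ?_)
    · obtain ⟨y, hy⟩ := hreg r
      refine ⟨r * y, I.mul_mem_right _ hr, ?_⟩
      rw [smul_smul]
      congr 1
      rw [mul_right_comm, ← pow_two]; exact hy.symm
    · exact exists_lu_add hx hy
  obtain ⟨e, he, hx⟩ := this
  exact ⟨e, he, Subtype.ext hx⟩

variable [HasDerivedCategory.{w} (ModuleCat.{u} R)]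
variable {L : Set (DerivedCategory (ModuleCat.{u} R))} {A : CochainComplex (ModuleCat.{u} R) ℤ}

/-- Ideals all of whose locally unital modules are good. -/
def Good (L : Set (DerivedCategory (ModuleCat.{u} R))) (A : CochainComplex (ModuleCat.{u} R) ℤ)
    (I : Ideal R) : Prop := ∀ N : ModuleCat.{u} R, LU I N → ModMem L A N

theorem good_sSup (hreg : IsAbsolutelyFlat R) (hL : IsLocalizingSubcategory.{u} L) :
    Good L A (sSup {I | Good L A I}) := by
  classical
  set I₀ := sSup {I | Good L A I} with hI₀
  refine ModMem.of_class hreg hL (fun N => LU I₀ N) fun N hN => ?_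
  let ι := {I : Ideal R // Good L A I}
  let X : ι → Submodule R N := fun J => J.1 • ⊤
  refine ⟨ModuleCat.of R (DirectSum ι (fun J => X J)),
    DirectSum.toModule R ι N (fun J => (X J).subtype), ?_, ?_, ?_⟩
  · exact ModMem.of_isCop hL (isCop_directSum (fun J => X J))
      fun J => J.2 _ (LU.smul_top hreg _ _)
  · intro x
    obtain ⟨e, he, hx⟩ := hN x
    have : ∀ e ∈ I₀, e • x ∈ LinearMap.range
        (DirectSum.toModule R ι N (fun J => (X J).subtype)) := by
      suffices I₀ ≤ (LinearMap.range (DirectSum.toModule R ι N (fun J => (X J).subtype))).comap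
        (LinearMap.toSpanSingleton R N x) from fun e he => this he
      refine sSup_le fun J hJ e he => ?_
      refine ⟨DirectSum.lof R ι (fun J => X J) ⟨J, hJ⟩
        ⟨e • x, Submodule.smul_mem_smul he trivial⟩, ?_⟩
      rw [DirectSum.toModule_lof]
      rfl
    have := this e he
    rwa [hx] at this
  · exact LU.submodule (LU.directSum _ fun J => (LU.smul_top hreg _ _).mono (le_sSup J.2)) _

theorem modMem_quot (hreg : IsAbsolutelyFlat R) (hL : IsLocalizingSubcategory.{u} L)
    (hS : ∀ P : PrimeSpectrum R, ModMem L A (ModuleCat.of R (Localization.AtPrime P.asIdeal)))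
    (m : Ideal R) [hm : m.IsMaximal] : ModMem L A (ModuleCat.of R (R ⧸ m)) := by
  refine ModMem.of_iso hL ?_ (hS ⟨m, hm.isPrime⟩)
  let φ : R →ₗ[R] Localization.AtPrime m := Algebra.linearMap R _
  have hker : LinearMap.ker φ = m := by
    ext r
    rw [LinearMap.mem_ker]
    change algebraMap R (Localization.AtPrime m) r = 0 ↔ _
    rw [IsLocalization.map_eq_zero_iff m.primeCompl]
    constructor
    · rintro ⟨s, hs⟩
      exact (hm.isPrime.mem_or_mem (hs ▸ m.zero_mem)).resolve_left s.2
    · intro hr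
      obtain ⟨x, hx⟩ := hreg r
      refine ⟨⟨1 - r * x, fun h => ?_⟩, ?_⟩
      · exact hm.ne_top ((Ideal.eq_top_iff_one _).2
          (by simpa using m.add_mem h (m.mul_mem_right x hr)))
      · change (1 - r * x) * r = 0
        linear_combination hx
  have hsurj : Function.Surjective φ := by
    intro y
    obtain ⟨r, s, rfl⟩ := IsLocalization.exists_mk'_eq m.primeCompl y
    obtain ⟨x, hx⟩ := hreg s
    refine ⟨r * x, ?_⟩
    symm
    change _ = algebraMap R (Localization.AtPrime m) (r * x)
    rw [IsLocalization.mk'_eq_iff_eq_mul, ← map_mul, IsLocalization.eq_iff_exists m.primeCompl]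
    refine ⟨s, ?_⟩
    linear_combination r * hx
  exact (((Submodule.quotEquivOfEq _ _ hker).symm.trans
    (φ.quotKerEquivOfSurjective hsurj)).toModuleIso).symm

theorem modMem_of_torsion (hL : IsLocalizingSubcategory.{u} L)
    (m : Ideal R) [hm : m.IsMaximal] (hq : ModMem L A (ModuleCat.of R (R ⧸ m)))
    (V : Type u) [AddCommGroup V] [Module R V] (hV : Module.IsTorsionBySet R V m) :
    ModMem L A (ModuleCat.of R V) := by
  classical
  letI := Ideal.Quotient.field m
  letI := hV.module
  have : IsScalarTower R (R ⧸ m) V := hV.isScalarTower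
  let b := Module.Basis.ofVectorSpace (R ⧸ m) V
  let e : V ≃ₗ[R] DirectSum (Module.Basis.ofVectorSpaceIndex (R ⧸ m) V) (fun _ => R ⧸ m) :=
    (b.repr.restrictScalars R).trans (finsuppLEquivDirectSum R (R ⧸ m) _)
  exact ModMem.of_iso hL e.symm.toModuleIso (ModMem.of_isCop hL
    (isCop_directSum (fun _ : Module.Basis.ofVectorSpaceIndex (R ⧸ m) V => R ⧸ m)) fun _ => hq)

theorem good_top (hreg : IsAbsolutelyFlat R) (hsa : IsSemiArtinianRing R)
    (hL : IsLocalizingSubcategory.{u} L)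
    (hS : ∀ P : PrimeSpectrum R, ModMem L A (ModuleCat.of R (Localization.AtPrime P.asIdeal))) :
    Good L A (⊤ : Ideal R) := by
  have hI := good_sSup (L := L) (A := A) hreg hL
  set I := sSup {I | Good L A I} with hIdef
  by_contra hcon
  have hne : I ≠ ⊤ := fun h => hcon (h ▸ hI)
  obtain ⟨S, hSs⟩ := hsa I hne
  obtain ⟨m, hm, ⟨e⟩⟩ := isSimpleModule_iff_quot_maximal.1 hSs
  let J : Ideal R := S.comap I.mkQ
  have hmS : ∀ a ∈ m, ∀ j ∈ J, a * j ∈ I := fun a ha j hj => by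
    have h1 : a • (⟨I.mkQ j, hj⟩ : S) = 0 := by
      apply e.injective
      rw [map_smul, map_zero]
      obtain ⟨y, hy⟩ := Submodule.Quotient.mk_surjective _ (e ⟨I.mkQ j, hj⟩)
      rw [← hy, ← Submodule.Quotient.mk_smul, Submodule.Quotient.mk_eq_zero]
      exact m.mul_mem_right _ ha
    have h2 : I.mkQ (a * j) = 0 := congrArg Subtype.val h1
    exact (Submodule.Quotient.mk_eq_zero I).1 h2
  have hJ : Good L A J := by
    intro N hN
    refine ModMem.of_submodule hreg hL N (I • ⊤) (hI _ (LU.smul_top hreg _ _)) ?_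
    refine modMem_of_torsion hL m (modMem_quot hreg hL hS m) _ ?_
    rintro x ⟨a, ha⟩
    obtain ⟨x, rfl⟩ := Submodule.mkQ_surjective _ x
    obtain ⟨c, hc, hx⟩ := hN x
    change a • Submodule.mkQ _ x = 0
    rw [← map_smul, ← hx, smul_smul, Submodule.mkQ_apply, Submodule.Quotient.mk_eq_zero]
    exact Submodule.smul_mem_smul (hmS a ha c hc) trivial
  have hle : J ≤ I := le_sSup hJ
  have : Nontrivial S := IsSimpleModule.nontrivial R S
  obtain ⟨⟨s, hs⟩, hs0⟩ := exists_ne (0 : S)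
  obtain ⟨r, rfl⟩ := I.mkQ_surjective s
  apply hs0
  have : r ∈ I := hle hs
  exact Subtype.ext ((Submodule.Quotient.mk_eq_zero I).2 this)

end RingPart

theorem statement17 (R : Type u) [CommRing R] [HasDerivedCategory.{w} (ModuleCat.{u} R)]
    (hreg : IsAbsolutelyFlat R) (hsa : IsSemiArtinianRing R)
    (A : DerivedCategory (ModuleCat.{u} R)) (A' : CochainComplex (ModuleCat.{u} R) ℤ)
    (e : DerivedCategory.Q.obj A' ≅ A) :
    A ∈ localizingClosure.{u} {B : DerivedCategory (ModuleCat.{u} R) |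
      ∃ P : PrimeSpectrum R, B = DerivedCategory.Q.obj (tensorResidueField R P A')} := by
  rintro L ⟨hL, hS⟩
  have h : ModMem L A' (𝟙_ (ModuleCat.{u} R)) :=
    good_top hreg hsa hL (fun P => hS ⟨P, rfl⟩) _ fun x => ⟨1, trivial, one_smul R x⟩
  refine hL.mem_of_iso (DerivedCategory.Q.mapIso ?_ ≪≫ e) h
  exact HomologicalComplex.Hom.isoOfComponents (fun n => λ_ (A'.X n)) (fun i j _ => by
    exact (leftUnitor_naturality (A'.d i j)).symm)
end
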